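/- arXiv:1603.08324 — 4 statements merged into one kernel-verified Lean document; each statement's English description precedes it below -/
import Mathlib

section
/- Let m ≥ 1 and let Ω be a body in ℝ^m. Then the vector-valued integral ∫_Ω |y|^{α−m−2} y dy equals 0 for every real α > 1 if and only if Ω satisfies the balance law at the origin. (Note that for α > 1 the gradient of the r^{α−m}-potential V_Ω^{(α)} at the origin is a nonzero scalar multiple of ∫_Ω |y|^{α−m−2} y dy, so this says that the origin is a critical point of V_Ω^{(α)} for every α > 1 if and only if Ω satisfies the balance law at the origin.) -/
open MeasureTheory Metric Set

noncomputable section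

/-- A body in `ℝ^m`: the closure of a bounded open set. -/
def IsBody {m : ℕ} (Ω : Set (EuclideanSpace ℝ (Fin m))) : Prop :=
  ∃ U : Set (EuclideanSpace ℝ (Fin m)),
    IsOpen U ∧ Bornology.IsBounded U ∧ Ω = closure U

/-- `Ω` satisfies the balance law at the origin: for almost every `r ≥ 0`, the
vector-valued integral of `χ_Ω(r v) • v` over the unit sphere (with respect to the
surface, i.e. `(m-1)`-dimensional Hausdorff, measure) vanishes. -/
def SatisfiesBalanceLaw {m : ℕ} (Ω : Set (EuclideanSpace ℝ (Fin m))) : Prop :=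
  ∀ᵐ r ∂(volume.restrict (Ici (0 : ℝ))),
    (∫ v in sphere (0 : EuclideanSpace ℝ (Fin m)) 1,
      (Ω.indicator (fun _ => (1 : ℝ)) (r • v)) • v ∂(μH[(m : ℝ) - 1])) = 0


lemma charFun_radial {m : ℕ} (μ : Measure (EuclideanSpace ℝ (Fin m)))
    (hμ : ∀ e : EuclideanSpace ℝ (Fin m) ≃ₗᵢ[ℝ] EuclideanSpace ℝ (Fin m), μ.map e = μ)
    {s t : EuclideanSpace ℝ (Fin m)} (h : ‖s‖ = ‖t‖) : charFun μ s = charFun μ t := by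
  set R := (Submodule.reflection (ℝ ∙ (s - t))ᗮ) with hR
  have hRs : R s = t := Submodule.reflection_sub h
  rw [← hRs]
  conv_rhs => rw [← hμ R, charFun_apply]
  rw [charFun_apply, integral_map R.continuous.aemeasurable]
  · simp only [LinearIsometryEquiv.inner_map_map]
  · exact (by fun_prop : Continuous _).aestronglyMeasurable

lemma invariant_unique {m : ℕ} (μ ν : Measure (EuclideanSpace ℝ (Fin m)))
    [IsFiniteMeasure μ] [IsFiniteMeasure ν]
    (hμs : ∀ᵐ x ∂μ, ‖x‖ = 1) (hνs : ∀ᵐ x ∂ν, ‖x‖ = 1)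
    (hμ : ∀ e : EuclideanSpace ℝ (Fin m) ≃ₗᵢ[ℝ] EuclideanSpace ℝ (Fin m), μ.map e = μ)
    (hν : ∀ e : EuclideanSpace ℝ (Fin m) ≃ₗᵢ[ℝ] EuclideanSpace ℝ (Fin m), ν.map e = ν) :
    (ν univ).toNNReal • μ = (μ univ).toNNReal • ν := by
  apply Measure.ext_of_charFun
  ext t
  have key1 : ∀ (μ ν : Measure (EuclideanSpace ℝ (Fin m))) [IsFiniteMeasure μ] [IsFiniteMeasure ν]
      (_ : ∀ᵐ x ∂ν, ‖x‖ = 1)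
      (_ : ∀ e : EuclideanSpace ℝ (Fin m) ≃ₗᵢ[ℝ] EuclideanSpace ℝ (Fin m), μ.map e = μ),
      (ν.real univ) • charFun μ t =
        ∫ y, ∫ x, Complex.exp (inner ℝ x (‖t‖ • y) * Complex.I) ∂μ ∂ν := by
    intro μ ν _ _ hνs hμ
    rw [← integral_const]
    apply integral_congr_ae
    filter_upwards [hνs] with y hy
    rw [← charFun_apply]
    apply charFun_radial μ hμ
    rw [norm_smul, hy]; simp
  have h1 := key1 μ ν hνs hμ
  have h2 := key1 ν μ hμs hν
  rw [integral_integral_swap] at h1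
  · have h3 : (ν.real univ) • charFun μ t = (μ.real univ) • charFun ν t := by
      rw [h1, h2]
      congr 1; ext x; congr 1; ext y
      rw [real_inner_smul_right, real_inner_smul_right, real_inner_comm]
    simp only [charFun_apply] at h3 ⊢
    rw [integral_smul_nnreal_measure, integral_smul_nnreal_measure]
    exact h3
  · apply Integrable.of_bound (C := 1)
    · exact (by fun_prop : Continuous _).aestronglyMeasurable
    · filter_upwards with p
      simp only [Function.uncurry]
      rw [Complex.norm_exp_ofReal_mul_I]

def sphMeas (m : ℕ) : Measure (EuclideanSpace ℝ (Fin m)) :=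
  ((volume : Measure (EuclideanSpace ℝ (Fin m))).toSphere).map Subtype.val

instance (m : ℕ) : IsFiniteMeasure (sphMeas m) := by unfold sphMeas; infer_instance

open scoped Pointwise in
lemma sphMeas_apply {m : ℕ} {s : Set (EuclideanSpace ℝ (Fin m))} (hs : MeasurableSet s) :
    sphMeas m s = Module.finrank ℝ (EuclideanSpace ℝ (Fin m)) *
      volume (Ioo (0:ℝ) 1 • (s ∩ sphere 0 1)) := by
  unfold sphMeas
  rw [Measure.map_apply measurable_subtype_coe hs,
    Measure.toSphere_apply' _ (measurable_subtype_coe hs), Subtype.image_preimage_coe, inter_comm]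

open scoped Pointwise in
lemma sphMeas_invariant {m : ℕ}
    (e : EuclideanSpace ℝ (Fin m) ≃ₗᵢ[ℝ] EuclideanSpace ℝ (Fin m)) :
    (sphMeas m).map e = sphMeas m := by
  ext s hs
  rw [Measure.map_apply e.continuous.measurable hs, sphMeas_apply hs,
    sphMeas_apply (e.continuous.measurable hs)]
  congr 1
  have : Ioo (0:ℝ) 1 • (e ⁻¹' s ∩ sphere 0 1) = e ⁻¹' (Ioo (0:ℝ) 1 • (s ∩ sphere 0 1)) := by
    ext x
    simp only [Set.mem_smul, mem_inter_iff, mem_preimage, mem_sphere_zero_iff_norm]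
    constructor
    · rintro ⟨r, hr, y, ⟨hy, hy'⟩, rfl⟩
      exact ⟨r, hr, e y, ⟨hy, by simpa using hy'⟩, by simp⟩
    · rintro ⟨r, hr, y, ⟨hy, hy'⟩, h⟩
      refine ⟨r, hr, e.symm y, ⟨by simpa using hy, by simpa using hy'⟩, ?_⟩
      apply e.injective
      simpa using h
  rw [this]
  exact (e.measurePreserving).measure_preimage_emb e.toHomeomorph.measurableEmbedding _

lemma sphMeas_ae {m : ℕ} : ∀ᵐ x ∂(sphMeas m), ‖x‖ = 1 := by
  unfold sphMeas
  rw [ae_map_iff measurable_subtype_coe.aemeasurable (measurableSet_eq_fun (by fun_prop) (by fun_prop))]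
  filter_upwards with x
  simpa using x.2

lemma sphMeas_ne_zero {m : ℕ} (hm : 1 ≤ m) : sphMeas m univ ≠ 0 := by
  have : Nonempty (Fin m) := ⟨⟨0, hm⟩⟩
  unfold sphMeas
  rw [Measure.map_apply measurable_subtype_coe MeasurableSet.univ, preimage_univ]
  exact Measure.measure_univ_ne_zero.2
    (Measure.toSphere_ne_zero (volume : Measure (EuclideanSpace ℝ (Fin m))))

lemma hausdorff_invariant {m : ℕ}
    (e : EuclideanSpace ℝ (Fin m) ≃ₗᵢ[ℝ] EuclideanSpace ℝ (Fin m)) (d : ℝ) :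
    ((μH[d] : Measure (EuclideanSpace ℝ (Fin m))).restrict (sphere 0 1)).map e
      = (μH[d] : Measure (EuclideanSpace ℝ (Fin m))).restrict (sphere 0 1) := by
  have h : MeasurePreserving e (μH[d] : Measure (EuclideanSpace ℝ (Fin m))) μH[d] :=
    e.toIsometryEquiv.measurePreserving_hausdorffMeasure d
  have := h.restrict_preimage (s := sphere 0 1) isClosed_sphere.measurableSet
  have h2 : e ⁻¹' sphere 0 1 = sphere 0 1 := by
    ext x; simp
  rw [h2] at this
  exact this.map_eq

lemma hausdorff_sphere_pos (n : ℕ) :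
    (μH[(n:ℝ)] : Measure (EuclideanSpace ℝ (Fin (n+1)))) (sphere 0 1) ≠ 0 := by
  intro h0
  let p : EuclideanSpace ℝ (Fin (n+1)) → (Fin n → ℝ) := fun x i => x i.succ
  have hp : LipschitzWith 1 p := by
    apply LipschitzWith.of_dist_le_mul
    intro x y
    rw [dist_pi_le_iff (by positivity)]
    intro i
    simp only [NNReal.coe_one, one_mul, p, dist_eq_norm]
    exact PiLp.norm_apply_le (x - y) i.succ
  have h1 := hp.hausdorffMeasure_image_le (d := n) (by positivity) (sphere 0 1)
  have h2 : (μH[(n:ℝ)] : Measure (Fin n → ℝ)) = volume := by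
    have := hausdorffMeasure_pi_real (ι := Fin n)
    simpa using this
  rw [h0, h2] at h1
  simp only [mul_zero, nonpos_iff_eq_zero] at h1
  let U : Set (Fin n → ℝ) := {u | ∑ i, u i ^ 2 < 1}
  have hU : IsOpen U := isOpen_lt (by fun_prop) (by fun_prop)
  have hUne : U.Nonempty := ⟨0, by simp [U]⟩
  refine hU.measure_ne_zero volume hUne (measure_mono_null ?_ h1)
  intro u hu
  refine ⟨WithLp.toLp 2 (Fin.cons (√(1 - ∑ i, u i ^ 2)) u), ?_, ?_⟩
  · rw [mem_sphere_zero_iff_norm, EuclideanSpace.norm_eq, Real.sqrt_eq_one, Fin.sum_univ_succ]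
    simp only [Fin.cons_zero, Fin.cons_succ, Real.norm_eq_abs, sq_abs]
    rw [Real.sq_sqrt (by have : ∑ i, u i ^ 2 < 1 := hu
                         linarith)]
    ring
  · ext i; simp [p]

lemma hausdorff_sphere_fin (n : ℕ) :
    (μH[(n:ℝ)] : Measure (EuclideanSpace ℝ (Fin (n+1)))) (sphere 0 1) < ⊤ := by
  have h2 : (μH[(n:ℝ)] : Measure (Fin n → ℝ)) = volume := by
    have := hausdorffMeasure_pi_real (ι := Fin n)
    simpa using this
  let q : Fin (n+1) → ℝ → (Fin n → ℝ) → EuclideanSpace ℝ (Fin (n+1)) :=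
    fun i s u => WithLp.toLp 2 (Fin.insertNth i s u)
  let g : Fin (n+1) → ℝ → (Fin n → ℝ) → EuclideanSpace ℝ (Fin (n+1)) :=
    fun i s u => ‖q i s u‖⁻¹ • q i s u
  have hq : ∀ i s, ContDiff ℝ 1 (q i s) := by
    intro i s
    rw [contDiff_euclidean]
    intro j
    rcases Fin.eq_self_or_eq_succAbove i j with rfl | ⟨k, rfl⟩
    · simp only [q, Fin.insertNth_apply_same]; fun_prop
    · simp only [q, Fin.insertNth_apply_succAbove]; fun_prop
  have hq0 : ∀ i s u, s ≠ 0 → q i s u ≠ 0 := by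
    intro i s u hs h
    apply hs
    have := congrArg (fun x : EuclideanSpace ℝ (Fin (n+1)) => x i) h
    simpa [q] using this
  have hfin : ∀ i s, s ≠ 0 → (μH[(n:ℝ)] : Measure (EuclideanSpace ℝ (Fin (n+1))))
      (g i s '' Icc (-1) 1) < ⊤ := by
    intro i s hs
    have hg : ContDiff ℝ 1 (g i s) := by
      have hn : ContDiff ℝ 1 (fun u => ‖q i s u‖) := (hq i s).norm ℝ (fun u => hq0 i s u hs)
      exact (hn.inv (fun u => norm_ne_zero_iff.2 (hq0 i s u hs))).smul (hq i s)
    obtain ⟨K, hK⟩ := (hg.locallyLipschitz.locallyLipschitzOn (s := Icc (-1) 1)).exists_lipschitzOnWith_of_compact isCompact_Icc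
    refine (hK.hausdorffMeasure_image_le (d := n) (by positivity)).trans_lt ?_
    rw [h2]
    exact ENNReal.mul_lt_top (ENNReal.rpow_lt_top_of_nonneg (by positivity) (by simp)) isCompact_Icc.measure_lt_top
  have hsub : sphere (0 : EuclideanSpace ℝ (Fin (n+1))) 1 ⊆
      ⋃ i, (g i 1 '' Icc (-1) 1 ∪ g i (-1) '' Icc (-1) 1) := by
    intro x hx
    rw [mem_sphere_zero_iff_norm] at hx
    obtain ⟨i, -, hi⟩ := Finset.exists_max_image Finset.univ (fun i => |x i|) ⟨0, Finset.mem_univ _⟩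
    have hxi : 0 < |x i| := by
      by_contra hcon
      have : x = 0 := by
        ext j
        have := hi j (Finset.mem_univ _)
        have h3 : |x j| ≤ 0 := this.trans (not_lt.1 hcon)
        simpa using h3
      rw [this] at hx; simp at hx
    let u : Fin n → ℝ := fun k => |x i|⁻¹ * x (i.succAbove k)
    have hu : u ∈ Icc (-1 : Fin n → ℝ) 1 := by
      have : ∀ k, |u k| ≤ 1 := by
        intro k
        simp only [u, abs_mul, abs_inv, abs_abs]
        rw [inv_mul_le_iff₀ hxi, mul_one]
        exact hi _ (Finset.mem_univ _)
      exact ⟨fun k => (abs_le.1 (this k)).1, fun k => (abs_le.1 (this k)).2⟩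
    have hqx : ∀ s, s = |x i|⁻¹ * x i → g i s u = x := by
      intro s hs
      have : q i s u = |x i|⁻¹ • x := by
        ext j
        rcases Fin.eq_self_or_eq_succAbove i j with rfl | ⟨k, rfl⟩
        · simp [q, hs]
        · simp [q, u]
      simp only [g, this, norm_smul, hx, smul_smul]
      simp [hxi.ne']
    rw [mem_iUnion]
    refine ⟨i, ?_⟩
    rcases le_total 0 (x i) with h | h
    · left
      refine ⟨u, hu, hqx 1 ?_⟩
      rw [abs_of_nonneg h] at hxi ⊢
      field_simp
    · right
      refine ⟨u, hu, hqx (-1) ?_⟩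
      rw [abs_of_nonpos h] at hxi ⊢
      have : x i ≠ 0 := by linarith
      field_simp
  refine (measure_mono hsub).trans_lt ?_
  refine (measure_iUnion_le _).trans_lt ?_
  rw [tsum_fintype, ENNReal.sum_lt_top]
  intro i _
  exact (measure_union_le _ _).trans_lt (ENNReal.add_lt_top.2 ⟨hfin i 1 (by simp), hfin i (-1) (by simp)⟩)

lemma hausdorff_eq {m : ℕ} (hm : 1 ≤ m) : ∃ c : NNReal, c ≠ 0 ∧
    (μH[(m:ℝ) - 1] : Measure (EuclideanSpace ℝ (Fin m))).restrict (sphere 0 1) = c • sphMeas m := by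
  obtain ⟨n, rfl⟩ : ∃ n, m = n + 1 := ⟨m - 1, by omega⟩
  have hd : ((n+1 : ℕ) : ℝ) - 1 = n := by push_cast; ring
  rw [hd]
  set μ := (μH[(n:ℝ)] : Measure (EuclideanSpace ℝ (Fin (n+1)))).restrict (sphere 0 1) with hμ
  have hfin : IsFiniteMeasure μ := ⟨by rw [hμ, Measure.restrict_apply_univ]; exact hausdorff_sphere_fin n⟩
  have hpos : μ univ ≠ 0 := by rw [hμ, Measure.restrict_apply_univ]; exact hausdorff_sphere_pos n
  have hae : ∀ᵐ x ∂μ, ‖x‖ = 1 := by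
    filter_upwards [ae_restrict_mem isClosed_sphere.measurableSet] with x hx
    simpa using hx
  have key := invariant_unique μ (sphMeas (n+1)) hae sphMeas_ae
    (fun e => hausdorff_invariant e _) (fun e => sphMeas_invariant e)
  have hs0 : (sphMeas (n+1) univ).toNNReal ≠ 0 := by
    rw [ne_eq, ENNReal.toNNReal_eq_zero_iff, not_or]
    exact ⟨sphMeas_ne_zero hm, measure_ne_top _ _⟩
  have hm0 : (μ univ).toNNReal ≠ 0 := by
    rw [ne_eq, ENNReal.toNNReal_eq_zero_iff, not_or]
    exact ⟨hpos, measure_ne_top _ _⟩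
  refine ⟨(sphMeas (n+1) univ).toNNReal⁻¹ * (μ univ).toNNReal, mul_ne_zero (inv_ne_zero hs0) hm0, ?_⟩
  rw [mul_smul, ← key, smul_smul, inv_mul_cancel₀ hs0, one_smul]

lemma polar {m : ℕ} {f : EuclideanSpace ℝ (Fin m) → EuclideanSpace ℝ (Fin m)} (hm : 1 ≤ m)
    (hf : Integrable f volume) :
    ∫ y, f y = ∫ r in Ioi (0:ℝ), r ^ (m-1) • ∫ v, f (r • v) ∂(sphMeas m) := by
  have : Nonempty (Fin m) := ⟨⟨0, hm⟩⟩
  let E := EuclideanSpace ℝ (Fin m)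
  have hd : Module.finrank ℝ E = m := by simp [E]
  have hmp := (volume : Measure E).measurePreserving_homeomorphUnitSphereProd
  rw [hd] at hmp
  have hemb := (Homeomorph.measurableEmbedding (homeomorphUnitSphereProd E))
  let G : sphere (0:E) 1 × Ioi (0:ℝ) → E := fun p => f (p.2.1 • p.1.1)
  have hG : ∀ x : ({(0:E)}ᶜ : Set E), G (homeomorphUnitSphereProd E x) = f x := by
    intro x
    simp only [G]
    congr 1
    exact congrArg Subtype.val ((homeomorphUnitSphereProd E).symm_apply_apply x)
  have hGint : Integrable G ((volume : Measure E).toSphere.prod (Measure.volumeIoiPow (m-1))) := by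
    rw [← hmp.integrable_comp_emb hemb]
    have : G ∘ (homeomorphUnitSphereProd E) = f ∘ Subtype.val := funext hG
    rw [this, ← integrableOn_iff_comap_subtypeVal (measurableSet_singleton _).compl]
    exact hf.integrableOn
  calc ∫ y, f y = ∫ x : ({(0:E)}ᶜ : Set E), f x.1 ∂((volume : Measure E).comap (↑)) := by
        rw [integral_subtype_comap (measurableSet_singleton _).compl fun x ↦ f x,
          restrict_compl_singleton]
    _ = ∫ p, G p ∂((volume : Measure E).toSphere.prod (Measure.volumeIoiPow (m-1))) := by
        rw [← hmp.integral_comp hemb]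
        simp only [hG]
    _ = ∫ r, ∫ v, G (v, r) ∂(volume : Measure E).toSphere ∂(Measure.volumeIoiPow (m-1)) :=
        integral_prod_symm _ hGint
    _ = ∫ r : Ioi (0:ℝ), ∫ v, f (r.1 • v) ∂(sphMeas m) ∂(Measure.volumeIoiPow (m-1)) := by
        congr 1
        ext1 r
        unfold sphMeas
        rw [(MeasurableEmbedding.subtype_coe isClosed_sphere.measurableSet).integral_map]
    _ = _ := by
        simp only [Measure.volumeIoiPow, ENNReal.ofReal]
        rw [integral_withDensity_eq_integral_smul,
          integral_subtype_comap measurableSet_Ioi fun a ↦ Real.toNNReal (a ^ (m - 1)) • ∫ v, f (a • v) ∂(sphMeas m),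
          setIntegral_congr_fun measurableSet_Ioi fun x hx ↦ ?_]
        · rw [NNReal.smul_def, Real.coe_toNNReal _ (pow_nonneg hx.out.le _)]
        · exact (measurable_subtype_coe.pow_const _).real_toNNReal

def radF {m : ℕ} (Ω : Set (EuclideanSpace ℝ (Fin m))) (r : ℝ) : EuclideanSpace ℝ (Fin m) :=
  ∫ v, (Ω.indicator (fun _ => (1 : ℝ)) (r • v)) • v ∂(sphMeas m)

lemma polar_body {m : ℕ} (hm : 1 ≤ m) {Ω : Set (EuclideanSpace ℝ (Fin m))} (hΩ : MeasurableSet Ω)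
    (α : ℝ) (hf : IntegrableOn (fun y => (‖y‖ ^ (α - m - 2) : ℝ) • y) Ω) :
    ∫ y in Ω, (‖y‖ ^ (α - m - 2) : ℝ) • y = ∫ r in Ioi (0:ℝ), r ^ (α - 2) • radF Ω r := by
  rw [← integral_indicator hΩ, polar hm ((integrable_indicator_iff hΩ).2 hf)]
  apply setIntegral_congr_fun measurableSet_Ioi
  intro r hr
  have hr : 0 < r := hr
  have h1 : ∫ v, Ω.indicator (fun y => (‖y‖ ^ (α - m - 2) : ℝ) • y) (r • v) ∂(sphMeas m)
      = r ^ (α - m - 1) • radF Ω r := by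
    unfold radF
    rw [← integral_smul]
    apply integral_congr_ae
    filter_upwards [sphMeas_ae] with v hv
    by_cases h : r • v ∈ Ω
    · simp only [indicator_of_mem h, one_smul, norm_smul, hv, Real.norm_eq_abs, abs_of_pos hr,
        mul_one, smul_smul]
      congr 1
      rw [← Real.rpow_add_one hr.ne']
      congr 1; ring
    · simp [indicator_of_notMem h]
  simp only
  rw [h1, smul_smul, ← Real.rpow_natCast, ← Real.rpow_add hr]
  congr 2
  rw [Nat.cast_sub hm]; push_cast; ring

lemma integrableOn_body {m : ℕ} (hm : 1 ≤ m) {Ω : Set (EuclideanSpace ℝ (Fin m))}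
    {R : ℝ} (hR : Ω ⊆ ball 0 R) (k : ℕ) :
    IntegrableOn (fun y : EuclideanSpace ℝ (Fin m) => (‖y‖ ^ (((k:ℝ) + 2) - m - 2) : ℝ) • y) Ω := by
  have : Nonempty (Fin m) := ⟨⟨0, hm⟩⟩
  refine IntegrableOn.mono_set ?_ hR
  unfold IntegrableOn
  rw [← integrable_norm_iff (by fun_prop)]
  have : (fun y : EuclideanSpace ℝ (Fin m) => ‖(‖y‖ ^ (((k:ℝ) + 2) - m - 2) : ℝ) • y‖)
      = fun y => (fun t : ℝ => |t ^ (((k:ℝ) + 2) - m - 2)| * t) ‖y‖ := by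
    ext y; rw [norm_smul, Real.norm_eq_abs]
  rw [this]
  refine (integrableOn_fun_norm_addHaar (E := EuclideanSpace ℝ (Fin m)) volume
    (f := fun t : ℝ => |t ^ (((k:ℝ) + 2) - m - 2)| * t)).2 ?_
  have hk : IntegrableOn (fun t : ℝ => t ^ k) (Ioo 0 R) :=
    ((continuous_pow k).integrableOn_Icc (a := 0) (b := R)).mono_set Ioo_subset_Icc_self
  refine hk.congr_fun ?_ measurableSet_Ioo
  intro t ht
  have ht : 0 < t := ht.1
  simp only [finrank_euclideanSpace, Fintype.card_fin, smul_eq_mul]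
  rw [abs_of_pos (Real.rpow_pos_of_pos ht _), ← Real.rpow_add_one ht.ne', ← Real.rpow_natCast,
    ← Real.rpow_natCast, ← Real.rpow_add ht, Nat.cast_sub hm]
  congr 1; push_cast; ring

lemma radF_sm {m : ℕ} {Ω : Set (EuclideanSpace ℝ (Fin m))} (hΩ : MeasurableSet Ω) :
    StronglyMeasurable (radF Ω) := by
  unfold radF
  apply StronglyMeasurable.integral_prod_right (f := fun (r : ℝ) (v : EuclideanSpace ℝ (Fin m)) =>
    (Ω.indicator (fun _ => (1 : ℝ)) (r • v)) • v)
  apply Measurable.stronglyMeasurable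
  have h1 : Measurable (Ω.indicator (fun _ => (1 : ℝ))) := measurable_const.indicator hΩ
  exact (h1.comp (measurable_fst.smul measurable_snd)).smul measurable_snd

lemma radF_bound {m : ℕ} (Ω : Set (EuclideanSpace ℝ (Fin m))) (r : ℝ) :
    ‖radF Ω r‖ ≤ 1 * (sphMeas m).real univ := by
  apply norm_integral_le_of_norm_le_const
  filter_upwards [sphMeas_ae] with v hv
  rw [norm_smul, hv, mul_one]
  by_cases h : r • v ∈ Ω
  · simp [indicator_of_mem h]
  · simp [indicator_of_notMem h]

lemma radF_supp {m : ℕ} {Ω : Set (EuclideanSpace ℝ (Fin m))}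
    {R : ℝ} (hR : Ω ⊆ ball 0 R) {r : ℝ} (hr : R ≤ r) : radF Ω r = 0 := by
  unfold radF
  rw [integral_eq_zero_of_ae]
  filter_upwards [sphMeas_ae] with v hv
  have h : r • v ∉ Ω := by
    intro h
    have := hR h
    rw [mem_ball_zero_iff, norm_smul, hv, mul_one, Real.norm_eq_abs] at this
    linarith [le_abs_self r]
  simp [indicator_of_notMem h]

lemma moments {E : Type*} [NormedAddCommGroup E] [NormedSpace ℝ E] [CompleteSpace E]
    {R : ℝ} {G : ℝ → E} (hG : Integrable G) (hsupp : ∀ r, r ∉ Icc 0 R → G r = 0)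
    (h : ∀ k : ℕ, ∫ r, r ^ k • G r = 0) : ∀ᵐ r, G r = 0 := by
  have hInt : ∀ g : ℝ → ℝ, Continuous g → Integrable (fun r => g r • G r) := by
    intro g hg
    obtain ⟨C, hC⟩ := isCompact_Icc.exists_bound_of_continuousOn (hg.continuousOn (s := Icc 0 R))
    refine (hG.norm.const_mul C).mono' (hg.aestronglyMeasurable.smul hG.aestronglyMeasurable) ?_
    filter_upwards with r
    rw [norm_smul]
    by_cases hr : r ∈ Icc 0 R
    · exact mul_le_mul_of_nonneg_right (hC r hr) (norm_nonneg _)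
    · simp [hsupp r hr]
  have hpoly : ∀ p : Polynomial ℝ, ∫ r, p.eval r • G r = 0 := by
    intro p
    simp only [Polynomial.eval_eq_sum_range, Finset.sum_smul, mul_smul]
    rw [integral_finsetSum]
    · apply Finset.sum_eq_zero
      intro i _
      rw [integral_smul, h, smul_zero]
    · intro i _
      exact (hInt _ (continuous_pow i)).smul (p.coeff i)
  apply ae_eq_zero_of_integral_contDiff_smul_eq_zero hG.locallyIntegrable
  intro g hg _
  rw [← norm_eq_zero]
  apply le_antisymm _ (norm_nonneg _)
  apply le_of_forall_pos_le_add
  intro ε hε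
  have hI : 0 ≤ ∫ r, ‖G r‖ := integral_nonneg (fun _ => norm_nonneg _)
  obtain ⟨p, hp⟩ := exists_polynomial_near_of_continuousOn 0 R g hg.continuous.continuousOn
    (ε / (1 + ∫ r, ‖G r‖)) (by positivity)
  have h1 : ∫ r, g r • G r = ∫ r, (g r - p.eval r) • G r := by
    simp only [sub_smul]
    rw [integral_sub (hInt _ hg.continuous) (hInt _ p.continuous), hpoly, sub_zero]
  rw [h1, zero_add]
  calc ‖∫ r, (g r - p.eval r) • G r‖ ≤ ∫ r, (ε / (1 + ∫ r, ‖G r‖)) * ‖G r‖ := by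
        apply norm_integral_le_of_norm_le (hG.norm.const_mul _)
        filter_upwards with r
        rw [norm_smul]
        by_cases hr : r ∈ Icc 0 R
        · refine mul_le_mul_of_nonneg_right ?_ (norm_nonneg _)
          rw [Real.norm_eq_abs, abs_sub_comm]
          exact (hp r hr).le
        · simp [hsupp r hr]
    _ = (ε / (1 + ∫ r, ‖G r‖)) * ∫ r, ‖G r‖ := integral_const_mul _ _
    _ ≤ ε := by
        rw [div_mul_eq_mul_div, div_le_iff₀ (by positivity)]
        nlinarith

theorem stmt0 {m : ℕ} (hm : 1 ≤ m) (Ω : Set (EuclideanSpace ℝ (Fin m)))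
    (hΩ : IsBody Ω) :
    (∀ α : ℝ, 1 < α →
      (∫ y in Ω, (‖y‖ ^ (α - m - 2) : ℝ) • y) = 0) ↔
    SatisfiesBalanceLaw Ω := by
  obtain ⟨U, -, hUb, rfl⟩ := hΩ
  have hmeas : MeasurableSet (closure U) := isClosed_closure.measurableSet
  obtain ⟨R, hR⟩ := hUb.closure.subset_ball (0 : EuclideanSpace ℝ (Fin m))
  generalize closure U = Ω at hmeas hR
  obtain ⟨c, hc, hH⟩ := hausdorff_eq hm
  have hbal : SatisfiesBalanceLaw Ω ↔ ∀ᵐ r ∂(volume.restrict (Ioi (0 : ℝ))), radF Ω r = 0 := by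
    unfold SatisfiesBalanceLaw
    rw [hH, Measure.restrict_congr_set Ioi_ae_eq_Ici.symm]
    simp only [integral_smul_nnreal_measure, smul_eq_zero, hc, false_or]
    rfl
  rw [hbal]
  constructor
  · intro h
    rw [ae_restrict_iff' measurableSet_Ioi]
    have hsupp : ∀ r, r ∉ Icc 0 R → (Ioi (0:ℝ)).indicator (radF Ω) r = 0 := by
      intro r hr
      by_cases h0 : r ∈ Ioi (0:ℝ)
      · rw [indicator_of_mem h0]
        apply radF_supp hR
        by_contra hlt
        exact hr ⟨le_of_lt h0, (not_le.1 hlt).le⟩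
      · exact indicator_of_notMem h0 _
    have hsm : StronglyMeasurable ((Ioi (0:ℝ)).indicator (radF Ω)) :=
      (radF_sm hmeas).indicator measurableSet_Ioi
    have hGint : Integrable ((Ioi (0:ℝ)).indicator (radF Ω)) := by
      have : IntegrableOn ((Ioi (0:ℝ)).indicator (radF Ω)) (Icc 0 R) := by
        refine IntegrableOn.of_bound isCompact_Icc.measure_lt_top hsm.aestronglyMeasurable
          (1 * (sphMeas m).real univ) ?_
        filter_upwards with r
        exact (norm_indicator_le_norm_self _ _).trans (radF_bound Ω r)
      rwa [integrableOn_iff_integrable_of_support_subset] at this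
      intro r hr
      by_contra h0
      exact hr (hsupp r h0)
    have := moments hGint hsupp ?_
    · filter_upwards [this] with r hr h0
      rwa [indicator_of_mem h0] at hr
    · intro k
      have hk := h ((k:ℝ) + 2) (by linarith [(Nat.cast_nonneg k : (0:ℝ) ≤ k)])
      rw [polar_body hm hmeas _ (integrableOn_body hm hR k), ← integral_indicator measurableSet_Ioi] at hk
      rw [← hk]
      congr 1
      ext1 r
      by_cases h0 : r ∈ Ioi (0:ℝ)
      · rw [indicator_of_mem h0, indicator_of_mem h0]
        simp
      · rw [indicator_of_notMem h0, indicator_of_notMem h0, smul_zero]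
  · intro h α _
    by_cases hf : IntegrableOn (fun y => (‖y‖ ^ (α - m - 2) : ℝ) • y) Ω
    · rw [polar_body hm hmeas α hf]
      apply integral_eq_zero_of_ae
      filter_upwards [h] with r hr
      simp [hr]
    · exact integral_undef hf
end
end

section
/- Let m ≥ 1 and let Ω be a body in ℝ^m whose interior contains the origin. Then the following two conditions together hold — (i) ∫_Ω |y|^{α−m−2} y dy = 0 for every real α > 1, and (ii) ∫_{Ωᶜ} |y|^{α−m−2} y dy = 0 for every real α < 0 (where Ωᶜ is the complement of Ω) — if and only if Ω satisfies the balance law at the origin. (For α > 1 the gradient of V_Ω^{(α)} at an interior point is a nonzero multiple of the integral in (i), and for α < 0 it is a nonzero multiple of the integral in (ii), so this says the origin is a critical point of V_Ω^{(α)} for every α ∉ [0,1] if and only if Ω satisfies the balance law at the origin.) -/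
open MeasureTheory Metric Set

noncomputable section

section
variable {m : ℕ}
local notation "E" => EuclideanSpace ℝ (Fin m)

lemma aux_charFun_radial (μ : Measure E) (hinv : ∀ R : E ≃ₗᵢ[ℝ] E, μ.map R = μ)
    (s t : E) (h : ‖s‖ = ‖t‖) : charFun μ s = charFun μ t := by
  set R : E ≃ₗᵢ[ℝ] E := (Submodule.reflection (Submodule.span ℝ {s - t})ᗮ) with hR
  have hst : R s = t := Submodule.reflection_sub h
  have h1 : charFun (μ.map R) t = charFun μ s := by
    rw [charFun_apply, charFun_apply]
    refine (R.toHomeomorph.measurableEmbedding.integral_map _).trans ?_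
    refine integral_congr_ae (Filter.Eventually.of_forall fun x => ?_)
    rw [← hst]
    have : inner ℝ (R x) (R s) = inner ℝ x s := R.inner_map_map x s
    exact congrArg (fun a : ℝ => Complex.exp (a * Complex.I)) this
  rw [← h1, hinv]

lemma aux_charFun_avg (μ ν : Measure E) [IsFiniteMeasure μ] [IsFiniteMeasure ν]
    (hinv : ∀ R : E ≃ₗᵢ[ℝ] E, μ.map R = μ) (hν : ∀ᵐ u ∂ν, ‖u‖ = 1) (t : E) :
    ∫ u, (∫ x, Complex.exp ((‖t‖ * inner ℝ x u : ℝ) * Complex.I) ∂μ) ∂ν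
      = (ν.real univ : ℂ) * charFun μ t := by
  have : ∀ᵐ u ∂ν, (∫ x, Complex.exp ((‖t‖ * inner ℝ x u : ℝ) * Complex.I) ∂μ) = charFun μ t := by
    filter_upwards [hν] with u hu
    rw [← aux_charFun_radial μ hinv (‖t‖ • u) t (by simp [norm_smul, hu]), charFun_apply]
    simp [inner_smul_right]
  rw [integral_congr_ae this]
  simp

lemma aux_unique (μ ν : Measure E) [IsFiniteMeasure μ] [IsFiniteMeasure ν]
    (hμi : ∀ R : E ≃ₗᵢ[ℝ] E, μ.map R = μ) (hνi : ∀ R : E ≃ₗᵢ[ℝ] E, ν.map R = ν)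
    (hμ : ∀ᵐ u ∂μ, ‖u‖ = 1) (hν : ∀ᵐ u ∂ν, ‖u‖ = 1) :
    (ν univ).toNNReal • μ = (μ univ).toNNReal • ν := by
  apply Measure.ext_of_charFun
  funext t
  have key : (ν.real univ : ℂ) * charFun μ t = (μ.real univ : ℂ) * charFun ν t := by
    rw [← aux_charFun_avg μ ν hμi hν t, ← aux_charFun_avg ν μ hνi hμ t]
    rw [integral_integral_swap]
    · simp_rw [real_inner_comm]
    · refine Integrable.of_bound (C := 1) ?_ ?_
      · apply Continuous.aestronglyMeasurable
        unfold Function.uncurry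
        fun_prop
      · refine Filter.Eventually.of_forall fun x => ?_
        simp only [Function.uncurry]
        rw [Complex.norm_exp_ofReal_mul_I]
  simp only [charFun_apply] at key ⊢
  rw [integral_smul_nnreal_measure, integral_smul_nnreal_measure]
  rw [NNReal.smul_def, NNReal.smul_def, Complex.real_smul, Complex.real_smul]
  exact key

/-- the surface measure from polar coordinates, as a measure on the whole space -/
def auxNu (m : ℕ) : Measure (EuclideanSpace ℝ (Fin m)) :=
  (volume : Measure (EuclideanSpace ℝ (Fin m))).toSphere.map Subtype.val

instance : IsFiniteMeasure (auxNu m) := by unfold auxNu; infer_instance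

lemma auxNu_norm : ∀ᵐ u ∂(auxNu m), ‖u‖ = 1 := by
  unfold auxNu
  rw [ae_map_iff measurable_subtype_coe.aemeasurable (measurableSet_eq_fun (by fun_prop) (by fun_prop))]
  exact Filter.Eventually.of_forall fun x => by simp

open scoped Pointwise in
lemma auxNu_inv (R : E ≃ₗᵢ[ℝ] E) : (auxNu m).map R = auxNu m := by
  ext s hs
  have hR : Measurable R := R.continuous.measurable
  rw [Measure.map_apply hR hs]
  unfold auxNu
  rw [Measure.map_apply measurable_subtype_coe (hR hs), Measure.map_apply measurable_subtype_coe hs,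
    Measure.toSphere_apply' _ (measurable_subtype_coe (hR hs)),
    Measure.toSphere_apply' _ (measurable_subtype_coe hs)]
  congr 1
  have : Ioo (0:ℝ) 1 • (((↑) : sphere (0:E) 1 → E) '' ((↑) ⁻¹' (R ⁻¹' s)))
     = R ⁻¹' (Ioo (0:ℝ) 1 • (((↑) : sphere (0:E) 1 → E) '' ((↑) ⁻¹' s))) := by
    ext x
    simp only [Subtype.image_preimage_coe, Set.mem_smul, mem_preimage, mem_inter_iff]
    constructor
    · rintro ⟨c, hc, y, ⟨hy1, hy2⟩, rfl⟩
      exact ⟨c, hc, R y, ⟨by simpa using hy1, hy2⟩, by simp⟩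
    · rintro ⟨c, hc, y, ⟨hy1, hy2⟩, h⟩
      refine ⟨c, hc, R.symm y, ⟨by simpa using hy1, by simpa using hy2⟩, ?_⟩
      rw [← map_smul, h]; simp
  rw [this]
  exact (R.measurePreserving).measure_preimage_emb R.toHomeomorph.measurableEmbedding _

lemma auxNu_univ_ne (hm : 1 ≤ m) : auxNu m univ ≠ 0 := by
  have : Nonempty (Fin m) := ⟨⟨0, hm⟩⟩
  unfold auxNu
  rw [Measure.map_apply measurable_subtype_coe .univ, preimage_univ, ne_eq, Measure.measure_univ_eq_zero]
  exact Measure.toSphere_ne_zero _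

/-- Hausdorff measure on the sphere. -/
def auxH (m : ℕ) : Measure (EuclideanSpace ℝ (Fin m)) :=
  (μH[(m : ℝ) - 1]).restrict (sphere (0 : EuclideanSpace ℝ (Fin m)) 1)

lemma auxH_norm : ∀ᵐ u ∂(auxH m), ‖u‖ = 1 := by
  unfold auxH
  filter_upwards [ae_restrict_mem isClosed_sphere.measurableSet] with x hx
  simpa using hx

lemma auxH_inv (R : E ≃ₗᵢ[ℝ] E) : (auxH m).map R = auxH m := by
  unfold auxH
  have h := (R.toIsometryEquiv.measurePreserving_hausdorffMeasure ((m:ℝ)-1)).restrict_preimage_emb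
    R.toHomeomorph.measurableEmbedding (sphere (0:E) 1)
  have h2 : R.toIsometryEquiv ⁻¹' (sphere (0:E) 1) = sphere 0 1 := by
    ext x; simp
  rw [h2] at h
  exact h.map_eq

lemma aux_finrank (hm : 1 ≤ m) (v : E) (hv : ‖v‖ = 1) :
    (Module.finrank ℝ ((Submodule.span ℝ {v})ᗮ : Submodule ℝ E) : ℝ) = (m:ℝ) - 1 := by
  obtain ⟨k, rfl⟩ : ∃ k, m = k + 1 := ⟨m - 1, by omega⟩
  have : Fact (Module.finrank ℝ (EuclideanSpace ℝ (Fin (k+1))) = k + 1) := ⟨by simp⟩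
  have hv0 : v ≠ 0 := by rintro rfl; simp at hv
  rw [Submodule.finrank_orthogonal_span_singleton (n := k) hv0]
  simp

lemma aux_exists_unit (hm : 1 ≤ m) : ∃ v : E, ‖v‖ = 1 := 
  ⟨EuclideanSpace.single ⟨0, hm⟩ 1, by simp⟩

lemma auxH_pos (hm : 1 ≤ m) : auxH m univ ≠ 0 := by
  obtain ⟨v, hv⟩ := aux_exists_unit hm
  have hfr := aux_finrank hm v hv
  set K : Submodule ℝ E := (Submodule.span ℝ {v})ᗮ with hK
  have hH : (μH[(m:ℝ)-1] : Measure K).IsAddHaarMeasure := by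
    rw [← hfr]; infer_instance
  have hlip : LipschitzWith 1 (K.orthogonalProjectionOnto : E → K) := by
    have := (K.orthogonalProjectionOnto).lipschitz
    exact this.weaken (by exact_mod_cast K.orthogonalProjectionOnto_norm_le)
  have hm0 : (0:ℝ) ≤ (m:ℝ) - 1 := by
    have : (1:ℝ) ≤ m := by exact_mod_cast hm
    linarith
  have hle := hlip.hausdorffMeasure_image_le hm0 (sphere (0:E) 1)
  have hsub : ball (0:K) 1 ⊆ K.orthogonalProjectionOnto '' (sphere (0:E) 1) := by
    intro w hw
    have hw1 : ‖w‖ < 1 := by simpa using hw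
    have hort : inner ℝ (w:E) v = 0 :=
      Submodule.mem_orthogonal_singleton_iff_inner_left.mp w.2
    refine ⟨(w:E) + Real.sqrt (1 - ‖w‖^2) • v, ?_, ?_⟩
    · rw [mem_sphere_zero_iff_norm, ← sq_eq_sq₀ (norm_nonneg _) zero_le_one, norm_add_sq_real,
        inner_smul_right, hort, norm_smul, hv, mul_one, Real.norm_eq_abs, sq_abs, Real.sq_sqrt]
      · simp
      · nlinarith [norm_nonneg w]
    · rw [map_add, map_smul, Submodule.orthogonalProjectionOnto_mem_subspace_eq_self,
        Submodule.orthogonalProjectionOnto_orthogonalComplement_singleton_eq_zero]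
      simp
  have hpos : 0 < (μH[(m:ℝ)-1] : Measure K) (ball (0:K) 1) := measure_ball_pos _ _ one_pos
  unfold auxH
  rw [Measure.restrict_apply_univ]
  intro h0
  rw [h0] at hle
  have := hpos.trans_le ((measure_mono hsub).trans hle)
  simp at this

lemma aux_image_finite {K : Type*} [MetricSpace K] [MeasurableSpace K] [BorelSpace K] 
    [ProperSpace K] {F : Type*} [MetricSpace F] [MeasurableSpace F] [BorelSpace F]
    {d : ℝ} (hd : 0 ≤ d) [IsFiniteMeasureOnCompacts (μH[d] : Measure K)]
    (f : K → F) (hf : LocallyLipschitz f) (s : Set K) (hs : IsCompact s) :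
    μH[d] (f '' s) < ⊤ := by
  refine hs.induction_on (p := fun s => μH[d] (f '' s) < ⊤) (by simp) ?_ ?_ ?_
  · intro s t hst ht
    exact (measure_mono (image_mono hst)).trans_lt ht
  · intro s t h1 h2
    rw [image_union]
    exact measure_union_lt_top h1 h2
  · intro x hx
    obtain ⟨L, t, ht, hL⟩ := hf x
    have : t ∩ closedBall x 1 ∈ nhds x := Filter.inter_mem ht (closedBall_mem_nhds x one_pos)
    refine ⟨_, mem_nhdsWithin_of_mem_nhds this, ?_⟩
    refine ((hL.mono inter_subset_left).hausdorffMeasure_image_le hd).trans_lt ?_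
    refine ENNReal.mul_lt_top (ENNReal.rpow_lt_top_of_nonneg hd (by simp)) ?_
    exact (measure_mono inter_subset_right).trans_lt (isCompact_closedBall x 1).measure_lt_top

lemma aux_hemi (hm : 1 ≤ m) (v : E) (hv : ‖v‖ = 1) :
    μH[(m:ℝ)-1] (sphere (0:E) 1 ∩ {x | inner ℝ v x ≤ 0}) < ⊤ := by
  have hfr := aux_finrank hm v hv
  have hm0 : (0:ℝ) ≤ (m:ℝ) - 1 := by
    have : (1:ℝ) ≤ m := by exact_mod_cast hm
    linarith
  have hH : (μH[(m:ℝ)-1] : Measure ((Submodule.span ℝ {v})ᗮ : Submodule ℝ E)).IsAddHaarMeasure := by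
    rw [← hfr]; infer_instance
  have hlip : LocallyLipschitz (fun w : ((Submodule.span ℝ {v})ᗮ : Submodule ℝ E) => 
      stereoInvFunAux v (w:E)) := by
    apply ContDiff.locallyLipschitz (𝕂 := ℝ)
    exact (contDiff_stereoInvFunAux (m := 1)).comp
      ((Submodule.span ℝ {v})ᗮ : Submodule ℝ E).subtypeL.contDiff
  refine (measure_mono ?_).trans_lt (aux_image_finite hm0 _ hlip (closedBall 0 2)
    (isCompact_closedBall _ _))
  rintro x ⟨hx, hx2⟩
  have hx2' : inner ℝ v x ≤ 0 := hx2
  have hxv : x ≠ v := by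
    rintro rfl
    rw [real_inner_self_eq_norm_sq, hv] at hx2'
    norm_num at hx2'
  refine ⟨stereoToFun v x, ?_, ?_⟩
  · rw [mem_closedBall_zero_iff, stereoToFun_apply, norm_smul]
    have h1 : ‖(Submodule.span ℝ {v})ᗮ.orthogonalProjectionOnto x‖ ≤ 1 := by
      refine (Submodule.norm_orthogonalProjectionOnto_apply_le _ _).trans ?_
      simpa using hx.le
    have h2 : ‖2 / (1 - (innerSL ℝ v) x)‖ ≤ 2 := by
      rw [innerSL_apply_apply, Real.norm_eq_abs, abs_of_nonneg (by apply div_nonneg <;> linarith)]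
      rw [div_le_iff₀ (by linarith)]; linarith
    nlinarith [norm_nonneg ((Submodule.span ℝ {v})ᗮ.orthogonalProjectionOnto x)]
  · exact congrArg Subtype.val (stereo_left_inv hv (x := ⟨x, hx⟩) hxv)

lemma auxH_finite (hm : 1 ≤ m) : IsFiniteMeasure (auxH m) := by
  obtain ⟨v, hv⟩ := aux_exists_unit hm
  constructor
  unfold auxH
  rw [Measure.restrict_apply_univ]
  refine (measure_mono ?_).trans_lt (measure_union_lt_top (aux_hemi hm v hv)
    (aux_hemi hm (-v) (by simpa using hv)))
  intro x hx
  rcases le_total (inner ℝ v x) 0 with h | h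
  · exact Or.inl ⟨hx, h⟩
  · exact Or.inr ⟨hx, by simpa using h⟩

lemma aux_integral_iff (hm : 1 ≤ m) (f : E → E) :
    (∫ v, f v ∂(auxH m) = 0) ↔ ∫ v : sphere (0:E) 1, f v ∂(volume : Measure E).toSphere = 0 := by
  have := auxH_finite hm
  have h := aux_unique (auxH m) (auxNu m) auxH_inv auxNu_inv auxH_norm auxNu_norm
  have h2 : ∫ v, f v ∂(auxNu m) = ∫ v : sphere (0:E) 1, f v ∂(volume : Measure E).toSphere := by
    unfold auxNu
    exact (MeasurableEmbedding.subtype_coe isClosed_sphere.measurableSet).integral_map f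
  rw [← h2]
  have h3 := congrArg (fun μ : Measure E => ∫ v, f v ∂μ) h
  simp only [integral_smul_nnreal_measure] at h3
  have a1 : (auxNu m univ).toNNReal ≠ 0 := by
    simp [ENNReal.toNNReal_eq_zero_iff, auxNu_univ_ne hm]
  have a2 : (auxH m univ).toNNReal ≠ 0 := by
    simp [ENNReal.toNNReal_eq_zero_iff, auxH_pos hm]
  constructor
  · intro h; rw [h, smul_zero] at h3
    exact (smul_eq_zero.mp h3.symm).resolve_left a2
  · intro h; rw [h, smul_zero] at h3
    exact (smul_eq_zero.mp h3).resolve_left a1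
end

section
variable {m : ℕ}
local notation "E" => EuclideanSpace ℝ (Fin m)

lemma aux_polar (hm : 1 ≤ m) (f : E → E) (hf : Integrable f) :
    IntegrableOn (fun r : ℝ => r ^ (m-1) • ∫ v : sphere (0:E) 1, f (r • (v:E))
      ∂(volume : Measure E).toSphere) (Ioi 0) ∧
    ∫ x, f x = ∫ r in Ioi (0:ℝ), r ^ (m-1) • ∫ v : sphere (0:E) 1, f (r • (v:E))
      ∂(volume : Measure E).toSphere := by
  have : Nonempty (Fin m) := ⟨⟨0, hm⟩⟩
  have hdim : Module.finrank ℝ E = m := by simp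
  have hmp := (volume : Measure E).measurePreserving_homeomorphUnitSphereProd
  rw [hdim] at hmp
  set g : sphere (0:E) 1 × Ioi (0:ℝ) → E := fun p => f (p.2.1 • (p.1 : E)) with hg
  have hcomp : g ∘ (homeomorphUnitSphereProd E) = f ∘ ((↑) : ({0}ᶜ : Set E) → E) := by
    funext x
    have hx : ‖(x:E)‖ ≠ 0 := norm_ne_zero_iff.mpr x.2
    simp [g, smul_smul, hx]
  have hms : MeasurableSet ({0}ᶜ : Set E) := (measurableSet_singleton _).compl
  have hint : Integrable g ((volume : Measure E).toSphere.prod (Measure.volumeIoiPow (m - 1))) := by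
    rw [← hmp.integrable_comp_emb (Homeomorph.measurableEmbedding _), hcomp,
      ← integrableOn_iff_comap_subtypeVal hms]
    exact hf.integrableOn
  have hI : ∫ x, f x = ∫ p, g p ∂((volume : Measure E).toSphere.prod (Measure.volumeIoiPow (m - 1))) := by
    rw [← hmp.integral_comp (Homeomorph.measurableEmbedding _)]
    change _ = ∫ x, (g ∘ (homeomorphUnitSphereProd E)) x ∂_
    rw [hcomp]
    change _ = ∫ x : ({0}ᶜ : Set E), f x ∂_
    rw [integral_subtype_comap hms f, restrict_compl_singleton]
  have hmeas : Measurable (fun r : Ioi (0:ℝ) => (r.1 ^ (m-1)).toNNReal) := 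
    (measurable_subtype_coe.pow_const _).real_toNNReal
  have hsm : ∀ (h : ℝ → E) (r : ℝ), r ∈ Ioi (0:ℝ) → (r ^ (m-1)).toNNReal • h r = r ^ (m-1) • h r := by
    intro h r hr
    rw [NNReal.smul_def, Real.coe_toNNReal _ (pow_nonneg (le_of_lt hr) _)]
  set Φ : ℝ → E := fun r => ∫ v : sphere (0:E) 1, f (r • (v:E)) ∂(volume : Measure E).toSphere
  constructor
  · have h1 : Integrable (fun r : Ioi (0:ℝ) => Φ r) (Measure.volumeIoiPow (m-1)) :=
      hint.integral_prod_right
    unfold Measure.volumeIoiPow at h1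
    simp only [ENNReal.ofReal] at h1
    rw [integrable_withDensity_iff_integrable_smul hmeas] at h1
    have h2 : IntegrableOn (fun r : ℝ => (r ^ (m-1)).toNNReal • Φ r) (Ioi 0) := by
      rw [integrableOn_iff_comap_subtypeVal measurableSet_Ioi]
      exact h1
    exact h2.congr_fun (fun r hr => hsm Φ r hr) measurableSet_Ioi
  · rw [hI, integral_prod_symm _ hint]
    change ∫ r : Ioi (0:ℝ), Φ r ∂_ = _
    unfold Measure.volumeIoiPow
    simp only [ENNReal.ofReal]
    rw [integral_withDensity_eq_integral_smul hmeas,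
      integral_subtype_comap measurableSet_Ioi fun a ↦ Real.toNNReal (a ^ (m - 1)) • Φ a]
    exact setIntegral_congr_fun measurableSet_Ioi fun r hr => hsm Φ r hr

lemma aux_moment (G : ℝ → E) (hG : Integrable G) (R : ℝ) (hR : ∀ r, r ∉ Icc 0 R → G r = 0)
    (hn : ∀ n : ℕ, ∫ r, r ^ n • G r = 0) : ∀ᵐ r, G r = 0 := by
  have hbd : ∀ g : ℝ → ℝ, Continuous g → Integrable (fun r => g r • G r) := by
    intro g hg
    obtain ⟨C, hC⟩ := isCompact_Icc.exists_bound_of_continuousOn (s := Icc 0 R) hg.continuousOn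
    refine (hG.norm.const_mul C).mono' (hg.aestronglyMeasurable.smul hG.1) 
      (Filter.Eventually.of_forall fun r => ?_)
    by_cases h : r ∈ Icc 0 R
    · rw [norm_smul]; exact mul_le_mul_of_nonneg_right (hC r h) (norm_nonneg _)
    · simp [hR r h]
  have hpoly : ∀ p : Polynomial ℝ, ∫ r, p.eval r • G r = 0 := by
    intro p
    simp_rw [Polynomial.eval_eq_sum_range, Finset.sum_smul]
    rw [integral_finsetSum]
    · refine Finset.sum_eq_zero fun i _ => ?_
      simp_rw [mul_smul]
      rw [integral_smul, hn, smul_zero]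
    · intro i _
      exact hbd (fun r => p.coeff i * r ^ i) (by fun_prop)
  refine ae_eq_zero_of_integral_contDiff_smul_eq_zero hG.locallyIntegrable ?_
  intro g hg _
  rw [← norm_le_zero_iff]
  set M := ∫ r, ‖G r‖ with hM
  have hM0 : 0 ≤ M := integral_nonneg fun r => norm_nonneg _
  refine le_of_forall_pos_le_add fun ε hε => ?_
  obtain ⟨p, hp⟩ := exists_polynomial_near_of_continuousOn 0 R g hg.continuous.continuousOn
    (ε / (M + 1)) (by positivity)
  have h1 : ∫ r, g r • G r = ∫ r, (g r - p.eval r) • G r := by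
    simp_rw [sub_smul]
    rw [integral_sub (hbd g hg.continuous) (hbd _ p.continuous), hpoly, sub_zero]
  rw [h1, zero_add]
  have h2 : ‖∫ r, (g r - p.eval r) • G r‖ ≤ ∫ r, (ε / (M+1)) * ‖G r‖ := by
    refine norm_integral_le_of_norm_le (hG.norm.const_mul _) (Filter.Eventually.of_forall fun r => ?_)
    by_cases h : r ∈ Icc 0 R
    · rw [norm_smul]
      refine mul_le_mul_of_nonneg_right ?_ (norm_nonneg _)
      rw [Real.norm_eq_abs, abs_sub_comm]
      exact (hp r h).le
    · simp [hR r h]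
  refine h2.trans ?_
  rw [integral_const_mul, ← hM, div_mul_eq_mul_div, div_le_iff₀ (by positivity)]
  nlinarith

/-- the radial function of a set -/
def auxPhi (A : Set E) (r : ℝ) : E :=
  ∫ v : sphere (0:E) 1, (A.indicator (fun _ => (1:ℝ)) (r • (v:E))) • (v:E)
    ∂(volume : Measure E).toSphere

lemma aux_inner (A : Set E) (p : ℝ → ℝ) (r : ℝ) (hr : 0 < r) :
    ∫ v : sphere (0:E) 1, (A.indicator (fun y : E => p ‖y‖ • y)) (r • (v:E))
      ∂(volume : Measure E).toSphere = (p r * r) • auxPhi A r := by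
  unfold auxPhi
  rw [← integral_smul]
  refine integral_congr_ae (Filter.Eventually.of_forall fun v => ?_)
  have hv : ‖(v:E)‖ = 1 := by simp
  by_cases h : r • (v:E) ∈ A
  · simp [h, norm_smul, abs_of_pos hr, smul_smul]
  · simp [h]

lemma aux_back (hm : 1 ≤ m) (A : Set E) (hA : MeasurableSet A) (p : ℝ → ℝ)
    (h : ∀ᵐ r ∂(volume.restrict (Ioi (0:ℝ))), auxPhi A r = 0) :
    ∫ y in A, p ‖y‖ • y = 0 := by
  rw [← integral_indicator hA]
  by_cases hi : Integrable (A.indicator (fun y : E => p ‖y‖ • y))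
  · rw [(aux_polar hm _ hi).2]
    refine (integral_congr_ae ?_).trans (integral_zero ℝ E)
    filter_upwards [h, ae_restrict_mem measurableSet_Ioi] with r h1 h2
    rw [aux_inner A p r h2, h1, smul_zero, smul_zero]
  · exact integral_undef hi

lemma aux_mean_zero : ∫ v : sphere (0:E) 1, (v:E) ∂(volume : Measure E).toSphere = 0 := by
  have h2 : ∀ f : E → E, ∫ v, f v ∂(auxNu m) = ∫ v : sphere (0:E) 1, f v ∂(volume : Measure E).toSphere := by
    intro f
    unfold auxNu
    exact (MeasurableEmbedding.subtype_coe isClosed_sphere.measurableSet).integral_map f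
  rw [← h2 (fun v => v)]
  have h3 : ∫ v, v ∂(auxNu m) = ∫ v, -v ∂(auxNu m) := by
    conv_lhs => rw [← auxNu_inv (m := m) (LinearIsometryEquiv.neg ℝ)]
    exact ((LinearIsometryEquiv.neg ℝ : E ≃ₗᵢ[ℝ] E).toHomeomorph.measurableEmbedding.integral_map
      (fun v => v))
  rw [integral_neg] at h3
  have h4 : (2:ℝ) • ∫ v, v ∂(auxNu m) = 0 := by
    rw [two_smul]; exact eq_neg_iff_add_eq_zero.mp h3
  exact (smul_eq_zero.mp h4).resolve_left two_ne_zero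

lemma auxPhi_compl (A : Set E) (hA : MeasurableSet A) (r : ℝ) : auxPhi Aᶜ r = - auxPhi A r := by
  have hb : ∀ B : Set E, MeasurableSet B → Integrable (fun v : sphere (0:E) 1 => 
      (B.indicator (fun _ => (1:ℝ)) (r • (v:E))) • (v:E)) (volume : Measure E).toSphere := by
    intro B hB
    refine Integrable.of_bound (C := 1) ?_ (Filter.Eventually.of_forall fun v => ?_)
    · apply Measurable.aestronglyMeasurable
      refine Measurable.smul (f := fun v : sphere (0:E) 1 => B.indicator (fun _ => (1:ℝ)) (r • (v:E)))
        ?_ measurable_subtype_coe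
      exact ((measurable_const (a := (1:ℝ))).indicator hB).comp
        (measurable_subtype_coe.const_smul r)
    · by_cases h : r • (v:E) ∈ B <;> simp [h]
  rw [eq_neg_iff_add_eq_zero]
  unfold auxPhi
  rw [← integral_add (hb _ hA.compl) (hb _ hA)]
  refine Eq.trans (integral_congr_ae (Filter.Eventually.of_forall fun v => ?_)) aux_mean_zero
  by_cases h : r • (v:E) ∈ A <;> simp [h]

lemma aux_balance_iff (hm : 1 ≤ m) (Ω : Set E) :
    SatisfiesBalanceLaw Ω ↔ ∀ᵐ r ∂(volume.restrict (Ioi (0:ℝ))), auxPhi Ω r = 0 := by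
  unfold SatisfiesBalanceLaw
  rw [← restrict_Ioi_eq_restrict_Ici]
  refine Filter.eventually_congr (Filter.Eventually.of_forall fun r => ?_)
  exact aux_integral_iff hm (fun v => (Ω.indicator (fun _ => (1 : ℝ)) (r • v)) • v)

lemma aux_forward (hm : 1 ≤ m) (Ω : Set E) (hc : IsCompact Ω)
    (h : ∀ n : ℕ, ∫ y in Ω, ‖y‖ ^ n • y = 0) :
    ∀ᵐ r ∂(volume.restrict (Ioi (0:ℝ))), auxPhi Ω r = 0 := by
  have hint : ∀ n : ℕ, Integrable (Ω.indicator (fun y : E => (fun t : ℝ => t ^ n) ‖y‖ • y)) := by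
    intro n
    rw [integrable_indicator_iff hc.isClosed.measurableSet]
    exact (by fun_prop : Continuous fun y : E => ‖y‖ ^ n • y).continuousOn.integrableOn_compact hc
  set G : ℝ → E := (Ioi (0:ℝ)).indicator (fun r => r ^ m • auxPhi Ω r) with hG
  have hpow : ∀ (n : ℕ) (r : ℝ), r ∈ Ioi (0:ℝ) → r ^ (m-1) • ∫ v : sphere (0:E) 1, 
      (Ω.indicator (fun y : E => (fun t : ℝ => t ^ n) ‖y‖ • y)) (r • (v:E))
        ∂(volume : Measure E).toSphere = r ^ n • (r ^ m • auxPhi Ω r) := by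
    intro n r hr
    rw [aux_inner Ω (fun t => t ^ n) r hr, smul_smul, smul_smul]
    congr 1
    obtain ⟨k, rfl⟩ : ∃ k, m = k + 1 := ⟨m - 1, by omega⟩
    simp only [Nat.add_sub_cancel]
    ring
  have hGi : Integrable G := by
    rw [hG, integrable_indicator_iff measurableSet_Ioi]
    refine (aux_polar hm _ (hint 0)).1.congr_fun (fun r hr => ?_) measurableSet_Ioi
    simpa using hpow 0 r hr
  obtain ⟨R, hR⟩ := hc.isBounded.exists_norm_le
  have hzero : ∀ r, r ∉ Icc 0 R → G r = 0 := by
    intro r hr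
    by_cases h0 : r ∈ Ioi (0:ℝ)
    · have hrR : R < r := by
        by_contra hcon
        exact hr ⟨le_of_lt h0, not_lt.mp hcon⟩
      rw [hG, indicator_of_mem h0]
      have : auxPhi Ω r = 0 := by
        unfold auxPhi
        refine (integral_congr_ae (Filter.Eventually.of_forall fun v => ?_)).trans (integral_zero _ _)
        have : r • (v:E) ∉ Ω := by
          intro hmem
          have := hR _ hmem
          rw [norm_smul, Real.norm_eq_abs, abs_of_pos h0] at this
          simp at this
          linarith
        simp [this]
      rw [this, smul_zero]
    · rw [hG, indicator_of_notMem h0]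
  have hmom : ∀ n : ℕ, ∫ r, r ^ n • G r = 0 := by
    intro n
    have h1 := (aux_polar hm _ (hint n)).2
    rw [integral_indicator hc.isClosed.measurableSet, h n,
      setIntegral_congr_fun measurableSet_Ioi (hpow n), ← integral_indicator measurableSet_Ioi] at h1
    rw [h1]
    congr 1
    funext r
    by_cases h0 : r ∈ Ioi (0:ℝ)
    · rw [hG, indicator_of_mem h0, indicator_of_mem h0]
    · rw [hG, indicator_of_notMem h0, indicator_of_notMem h0, smul_zero]
  have hae := aux_moment G hGi R hzero hmom
  filter_upwards [ae_restrict_of_ae hae, ae_restrict_mem measurableSet_Ioi] with r h1 h2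
  rw [hG, indicator_of_mem h2] at h1
  exact (smul_eq_zero.mp h1).resolve_left (pow_pos h2 m).ne'
end

theorem stmt1 {m : ℕ} (hm : 1 ≤ m) (Ω : Set (EuclideanSpace ℝ (Fin m)))
    (hΩ : IsBody Ω) (h0 : (0 : EuclideanSpace ℝ (Fin m)) ∈ interior Ω) :
    ((∀ α : ℝ, 1 < α →
        (∫ y in Ω, (‖y‖ ^ (α - m - 2) : ℝ) • y) = 0) ∧
     (∀ α : ℝ, α < 0 →
        (∫ y in Ωᶜ, (‖y‖ ^ (α - m - 2) : ℝ) • y) = 0)) ↔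
    SatisfiesBalanceLaw Ω := by
  obtain ⟨U, -, hUb, rfl⟩ := hΩ
  have hc : IsCompact (closure U) := hUb.isCompact_closure
  rw [aux_balance_iff hm]
  constructor
  · rintro ⟨h1, -⟩
    refine aux_forward hm _ hc fun n => ?_
    have := h1 (m + 2 + n) (by have : (0:ℝ) ≤ m := m.cast_nonneg; have : (0:ℝ) ≤ n := n.cast_nonneg; linarith)
    rw [← this]
    have h2 : ((m:ℝ) + 2 + n - m - 2) = n := by ring
    simp_rw [h2, Real.rpow_natCast]
  · intro h
    refine ⟨fun α _ => ?_, fun α _ => ?_⟩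
    · exact aux_back hm _ isClosed_closure.measurableSet (fun t => t ^ (α - m - 2)) h
    · refine aux_back hm _ isClosed_closure.measurableSet.compl (fun t => t ^ (α - m - 2)) ?_
      filter_upwards [h] with r hr
      rw [auxPhi_compl _ isClosed_closure.measurableSet, hr, neg_zero]
end
end

section
/- Let f be a bounded measurable function on ℝ^m with compact support, and suppose f satisfies the balance law at a point x ∈ ℝ^m, i.e. for almost every r ≥ 0, ∫_{S^{m−1}} f(x + r v) v dσ(v) = 0. Then (∫_{ℝ^m} f(z) dz) · x = ∫_{ℝ^m} f(z) z dz. Consequently: (1) if the mass ∫_{ℝ^m} f(z) dz ≠ 0, then x is the centroid of f, namely x = (∫ f(z) z dz)/(∫ f(z) dz), so the centroid is the unique candidate for a stationary critical point of Pf(·,h); (2) if ∫_{ℝ^m} f(z) dz = 0 and ∫_{ℝ^m} f(z) z dz ≠ 0, then no point x satisfies the balance law for f. -/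
open MeasureTheory Metric Set

noncomputable section

/-- `f` satisfies the balance law at the point `x`: for almost every `r ≥ 0`, the
vector-valued integral of `f(x + r v) • v` over the unit sphere (with respect to the
surface, i.e. `(m-1)`-dimensional Hausdorff, measure) vanishes. -/
def BalanceLawAt {m : ℕ} (f : EuclideanSpace ℝ (Fin m) → ℝ)
    (x : EuclideanSpace ℝ (Fin m)) : Prop :=
  ∀ᵐ r ∂(volume.restrict (Ici (0 : ℝ))),
    (∫ v in sphere (0 : EuclideanSpace ℝ (Fin m)) 1,
      f (x + r • v) • v ∂(μH[(m : ℝ) - 1])) = 0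

open Filter Topology Module
open scoped Pointwise

/-- Differentiation: a measure absolutely continuous w.r.t. another one, with both uniformly
distributed on the set `S`, is a multiple of it. -/
lemma unif_smul {E : Type*} [NormedAddCommGroup E] [NormedSpace ℝ E] [FiniteDimensional ℝ E]
    [MeasurableSpace E] [BorelSpace E] (S : Set E)
    (ρ ν : Measure E) [IsFiniteMeasure ρ] [IsFiniteMeasure ν]
    (hac : ρ ≪ ν) (hS : ∀ᵐ x ∂ν, x ∈ S)
    (hρ : ∀ x ∈ S, ∀ y ∈ S, ∀ r, ρ (closedBall x r) = ρ (closedBall y r))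
    (hν : ∀ x ∈ S, ∀ y ∈ S, ∀ r, ν (closedBall x r) = ν (closedBall y r)) :
    ∃ c : ENNReal, ρ = c • ν := by
  have h := (Besicovitch.ae_tendsto_rnDeriv ρ ν).and hS
  by_cases h0 : ν = 0
  · refine ⟨0, ?_⟩
    subst h0
    simpa using Measure.absolutelyContinuous_zero_iff.1 hac
  have : NeZero ν := ⟨h0⟩
  obtain ⟨x, hx, hxS⟩ := h.exists
  refine ⟨ρ.rnDeriv ν x, ?_⟩
  have hc : ρ.rnDeriv ν =ᵐ[ν] fun _ => ρ.rnDeriv ν x := by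
    filter_upwards [h] with y hy
    refine tendsto_nhds_unique hy.1 ?_
    refine hx.congr fun r => ?_
    rw [hρ x hxS y hy.2, hν x hxS y hy.2]
  conv_lhs => rw [← Measure.withDensity_rnDeriv_eq ρ ν hac, withDensity_congr_ae hc]
  rw [withDensity_const]

lemma hausdorff_sphere_lt_top {m : ℕ} (hm : 0 < m) :
    μH[(m : ℝ) - 1] (sphere (0 : EuclideanSpace ℝ (Fin m)) 1) < ⊤ := by
  have hd : (0 : ℝ) ≤ (m : ℝ) - 1 := by
    have : (1 : ℝ) ≤ m := by exact_mod_cast hm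
    linarith
  refine (isCompact_sphere _ _).measure_lt_top_of_nhdsWithin fun x hx => ?_
  have hx1 : ‖x‖ = 1 := by simpa using hx
  set v : EuclideanSpace ℝ (Fin m) := -x with hvdef
  have hv : ‖v‖ = 1 := by simp [hvdef, hx1]
  have hfr : (finrank ℝ (ℝ ∙ v)ᗮ : ℝ) = (m : ℝ) - 1 := by
    have h1 := Submodule.finrank_add_finrank_orthogonal (ℝ ∙ v)
    rw [finrank_span_singleton (by intro h; simp [h] at hv), finrank_euclideanSpace_fin] at h1
    have h2 : (1 : ℝ) + (finrank ℝ (ℝ ∙ v)ᗮ : ℝ) = m := by exact_mod_cast h1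
    linarith
  have hcd : ContDiffAt ℝ 1 (stereoInvFunAux v ∘ ((↑) : (ℝ ∙ v)ᗮ → EuclideanSpace ℝ (Fin m))) 0 :=
    (contDiff_stereoInvFunAux.comp (ℝ ∙ v)ᗮ.subtypeL.contDiff).contDiffAt
  obtain ⟨K, t, ht, hK⟩ := hcd.exists_lipschitzOnWith
  have ht2 : t ∩ closedBall 0 1 ∈ 𝓝 (0 : (ℝ ∙ v)ᗮ) :=
    inter_mem ht (closedBall_mem_nhds _ one_pos)
  refine ⟨(stereoInvFunAux v ∘ ((↑) : (ℝ ∙ v)ᗮ → EuclideanSpace ℝ (Fin m))) '' (t ∩ closedBall 0 1), ?_, ?_⟩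
  · have h1 := (isOpenEmbedding_stereographic_symm hv).isOpenMap.image_mem_nhds ht2
    have h0 : (stereographic hv).symm 0 = (⟨x, hx⟩ : sphere (0 : EuclideanSpace ℝ (Fin m)) 1) := by
      apply Subtype.ext
      change stereoInvFunAux v ((0 : (ℝ ∙ v)ᗮ) : EuclideanSpace ℝ (Fin m)) = x
      simp [hvdef]
    rw [h0] at h1
    rw [nhdsWithin_eq_map_subtype_coe hx]
    have h2 := image_mem_map (m := (Subtype.val : sphere (0 : EuclideanSpace ℝ (Fin m)) 1 → EuclideanSpace ℝ (Fin m))) h1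
    rw [image_image] at h2
    exact h2
  · refine ((hK.mono inter_subset_left).hausdorffMeasure_image_le hd).trans_lt ?_
    refine ENNReal.mul_lt_top (by simp [ENNReal.rpow_lt_top_of_nonneg hd]) ?_
    rw [← hfr]
    exact (measure_mono inter_subset_right).trans_lt measure_closedBall_lt_top

lemma hausdorff_sphere_pos_s4 {m : ℕ} (hm : 0 < m) :
    0 < μH[(m : ℝ) - 1] (sphere (0 : EuclideanSpace ℝ (Fin m)) 1) := by
  have hd : (0 : ℝ) ≤ (m : ℝ) - 1 := by
    have : (1 : ℝ) ≤ m := by exact_mod_cast hm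
    linarith
  set v : EuclideanSpace ℝ (Fin m) := EuclideanSpace.single ⟨0, hm⟩ 1 with hvdef
  have hv : ‖v‖ = 1 := by simp [hvdef]
  have hfr : (finrank ℝ (ℝ ∙ v)ᗮ : ℝ) = (m : ℝ) - 1 := by
    have h1 := Submodule.finrank_add_finrank_orthogonal (ℝ ∙ v)
    rw [finrank_span_singleton (by intro h; simp [h] at hv), finrank_euclideanSpace_fin] at h1
    have h2 : (1 : ℝ) + (finrank ℝ (ℝ ∙ v)ᗮ : ℝ) = m := by exact_mod_cast h1
    linarith
  let P := (ℝ ∙ v)ᗮ.orthogonalProjectionOnto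
  have hP : LipschitzWith 1 P := by
    refine (ContinuousLinearMap.lipschitz P).weaken ?_
    exact_mod_cast Submodule.orthogonalProjectionOnto_norm_le (ℝ ∙ v)ᗮ
  have h1 := hP.hausdorffMeasure_image_le hd (sphere (0 : EuclideanSpace ℝ (Fin m)) 1)
  simp only [ENNReal.coe_one, ENNReal.one_rpow, one_mul] at h1
  refine lt_of_lt_of_le ?_ h1
  rw [← hfr]
  refine lt_of_lt_of_le (measure_ball_pos _ (0 : (ℝ ∙ v)ᗮ) one_pos) (measure_mono ?_)
  intro w hw
  have hw1 : ‖(w : EuclideanSpace ℝ (Fin m))‖ < 1 := by simpa using hw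
  have hwv : inner ℝ (w : EuclideanSpace ℝ (Fin m)) v = 0 :=
    Submodule.mem_orthogonal_singleton_iff_inner_left.mp w.2
  refine ⟨w + √(1 - ‖(w : EuclideanSpace ℝ (Fin m))‖ ^ 2) • v, ?_, ?_⟩
  · have hnn : 0 ≤ 1 - ‖(w : EuclideanSpace ℝ (Fin m))‖ ^ 2 := by
      nlinarith [norm_nonneg (w : EuclideanSpace ℝ (Fin m))]
    rw [mem_sphere_zero_iff_norm, ← sq_eq_sq₀ (norm_nonneg _) zero_le_one, norm_add_sq_real,
      inner_smul_right, hwv, norm_smul, hv, mul_one, Real.norm_eq_abs, sq_abs, Real.sq_sqrt hnn]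
    ring
  · have : P v = 0 := by
      apply Submodule.orthogonalProjectionOnto_orthogonal_apply_eq_zero
      exact Submodule.mem_span_singleton_self v
    rw [map_add, map_smul, this, smul_zero, add_zero]
    exact Submodule.orthogonalProjectionOnto_mem_subspace_eq_self w

lemma sphere_rot {m : ℕ} {x y : EuclideanSpace ℝ (Fin m)}
    (hx : x ∈ sphere (0 : EuclideanSpace ℝ (Fin m)) 1)
    (hy : y ∈ sphere (0 : EuclideanSpace ℝ (Fin m)) 1) :
    ∃ e : EuclideanSpace ℝ (Fin m) ≃ₗᵢ[ℝ] EuclideanSpace ℝ (Fin m), e x = y :=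
  ⟨(ℝ ∙ (x - y))ᗮ.reflection, Submodule.reflection_sub (by simp_all)⟩

lemma rot_image {m : ℕ} (e : EuclideanSpace ℝ (Fin m) ≃ₗᵢ[ℝ] EuclideanSpace ℝ (Fin m))
    (x : EuclideanSpace ℝ (Fin m)) (r : ℝ) :
    e '' (closedBall x r ∩ sphere 0 1) = closedBall (e x) r ∩ sphere 0 1 := by
  rw [image_inter e.injective, e.image_closedBall, e.image_sphere, map_zero]

/-- The polar-coordinates measure on the sphere, seen in the ambient space. -/
def nuS (m : ℕ) : Measure (EuclideanSpace ℝ (Fin m)) :=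
  (volume : Measure (EuclideanSpace ℝ (Fin m))).toSphere.map Subtype.val

instance (m : ℕ) : IsFiniteMeasure (nuS m) := by unfold nuS; infer_instance

lemma nuS_rot {m : ℕ} {x y : EuclideanSpace ℝ (Fin m)}
    (hx : x ∈ sphere (0 : EuclideanSpace ℝ (Fin m)) 1)
    (hy : y ∈ sphere (0 : EuclideanSpace ℝ (Fin m)) 1) (r : ℝ) :
    nuS m (closedBall x r) = nuS m (closedBall y r) := by
  obtain ⟨e, rfl⟩ := sphere_rot hx hy
  have key : ∀ z : EuclideanSpace ℝ (Fin m), nuS m (closedBall z r) =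
      finrank ℝ (EuclideanSpace ℝ (Fin m)) *
        volume (Ioo (0 : ℝ) 1 • (closedBall z r ∩ sphere (0 : EuclideanSpace ℝ (Fin m)) 1)) := by
    intro z
    rw [nuS, Measure.map_apply measurable_subtype_coe measurableSet_closedBall,
      Measure.toSphere_apply' _ (measurable_subtype_coe measurableSet_closedBall),
      Subtype.image_preimage_coe, inter_comm]
  rw [key, key, ← rot_image e x r]
  congr 1
  have : Ioo (0 : ℝ) 1 • (e '' (closedBall x r ∩ sphere 0 1)) =
      e '' (Ioo (0 : ℝ) 1 • (closedBall x r ∩ sphere 0 1)) := by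
    rw [← image2_smul, ← image2_smul, image_image2, image2_image_right]
    simp
  rw [this, e.image_eq_preimage_symm]
  exact (e.symm.measurePreserving.measure_preimage_equiv (f := e.symm.toMeasurableEquiv) _).symm

lemma rho_rot {m : ℕ} {x y : EuclideanSpace ℝ (Fin m)}
    (hx : x ∈ sphere (0 : EuclideanSpace ℝ (Fin m)) 1)
    (hy : y ∈ sphere (0 : EuclideanSpace ℝ (Fin m)) 1) (r d : ℝ) :
    (μH[d] : Measure (EuclideanSpace ℝ (Fin m))).restrict (sphere 0 1) (closedBall x r) =
    (μH[d] : Measure (EuclideanSpace ℝ (Fin m))).restrict (sphere 0 1) (closedBall y r) := by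
  obtain ⟨e, rfl⟩ := sphere_rot hx hy
  rw [Measure.restrict_apply measurableSet_closedBall,
    Measure.restrict_apply measurableSet_closedBall, ← rot_image e x r]
  exact (e.toIsometryEquiv.hausdorffMeasure_image d _).symm

lemma nuS_eq {m : ℕ} (hm : 0 < m) : ∃ c : ENNReal, nuS m =
    c • (μH[(m : ℝ) - 1] : Measure (EuclideanSpace ℝ (Fin m))).restrict (sphere 0 1) := by
  set ρ := (μH[(m : ℝ) - 1] : Measure (EuclideanSpace ℝ (Fin m))).restrict (sphere 0 1) with hρ
  have : IsFiniteMeasure ρ := ⟨by simpa [hρ] using hausdorff_sphere_lt_top hm⟩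
  have hρ0 : ρ ≠ 0 := by
    intro h
    have h1 : ρ univ = 0 := by simp [h]
    rw [hρ, Measure.restrict_apply_univ] at h1
    exact (hausdorff_sphere_pos_s4 hm).ne' h1
  have hS : ∀ᵐ x ∂(ρ + nuS m), x ∈ sphere (0 : EuclideanSpace ℝ (Fin m)) 1 := by
    rw [ae_add_measure_iff]
    refine ⟨ae_restrict_mem isClosed_sphere.measurableSet, ?_⟩
    refine (ae_map_iff measurable_subtype_coe.aemeasurable isClosed_sphere.measurableSet).2 ?_
    exact Eventually.of_forall fun x => x.2
  have hsum : ∀ x ∈ sphere (0 : EuclideanSpace ℝ (Fin m)) 1,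
      ∀ y ∈ sphere (0 : EuclideanSpace ℝ (Fin m)) 1, ∀ r,
      (ρ + nuS m) (closedBall x r) = (ρ + nuS m) (closedBall y r) := by
    intro x hx y hy r
    rw [Measure.add_apply, Measure.add_apply, nuS_rot hx hy, hρ, rho_rot hx hy]
  obtain ⟨c, hc⟩ := unif_smul (sphere 0 1) ρ (ρ + nuS m)
    (Measure.AbsolutelyContinuous.rfl.add_right _) hS
    (fun x hx y hy r => rho_rot hx hy r _) hsum
  obtain ⟨c', hc'⟩ := unif_smul (sphere 0 1) (nuS m) (ρ + nuS m)
    (by rw [add_comm]; exact Measure.AbsolutelyContinuous.rfl.add_right _) hS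
    (fun x hx y hy r => nuS_rot hx hy r) hsum
  have hc0 : c ≠ 0 := by rintro rfl; simp at hc; exact hρ0 hc
  have hct : c ≠ ⊤ := by
    rintro rfl
    have h1 : ρ univ = ⊤ * (ρ + nuS m) univ := by
      conv_lhs => rw [hc]
      simp [mul_add]
    have h2 : (ρ + nuS m) univ ≠ 0 := by
      simp [hρ0]
    rw [ENNReal.top_mul h2] at h1
    exact measure_ne_top ρ univ h1
  refine ⟨c' * c⁻¹, ?_⟩
  conv_rhs => rw [hc]
  rw [smul_smul, mul_assoc, ENNReal.inv_mul_cancel hc0 hct, mul_one]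
  exact hc'

lemma polar_zero {m : ℕ} (hm : 0 < m) (g : EuclideanSpace ℝ (Fin m) → EuclideanSpace ℝ (Fin m))
    (hg : Integrable g)
    (h : ∀ᵐ r ∂(volume.restrict (Ici (0 : ℝ))), ∫ v, g (r • v) ∂(nuS m) = 0) :
    ∫ z, g z = 0 := by
  have : Nonempty (Fin m) := ⟨⟨0, hm⟩⟩
  have hmp := (volume : Measure (EuclideanSpace ℝ (Fin m))).measurePreserving_homeomorphUnitSphereProd
  have hme := (homeomorphUnitSphereProd (EuclideanSpace ℝ (Fin m))).measurableEmbedding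
  let G : sphere (0 : (EuclideanSpace ℝ (Fin m))) 1 × Ioi (0 : ℝ) → (EuclideanSpace ℝ (Fin m)) := fun p => g (p.2.1 • p.1.1)
  have hG : ∀ z : ({0}ᶜ : Set (EuclideanSpace ℝ (Fin m))), G (homeomorphUnitSphereProd (EuclideanSpace ℝ (Fin m)) z) = g z := by
    intro z
    have := congrArg Subtype.val ((homeomorphUnitSphereProd (EuclideanSpace ℝ (Fin m))).symm_apply_apply z)
    simp only [G]
    congr 1
  have hres : (volume : Measure (EuclideanSpace ℝ (Fin m))).restrict {0}ᶜ = volume := restrict_compl_singleton _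
  have h1 : ∫ z, g z = ∫ p, G p ∂((volume : Measure (EuclideanSpace ℝ (Fin m))).toSphere.prod
      (Measure.volumeIoiPow (finrank ℝ (EuclideanSpace ℝ (Fin m)) - 1))) := by
    rw [← hmp.integral_comp hme]
    simp_rw [hG]
    rw [integral_subtype_comap (measurableSet_singleton _).compl g, hres]
  have hGi : Integrable G ((volume : Measure (EuclideanSpace ℝ (Fin m))).toSphere.prod
      (Measure.volumeIoiPow (finrank ℝ (EuclideanSpace ℝ (Fin m)) - 1))) := by
    rw [← hmp.integrable_comp_emb hme]
    have h2 : G ∘ homeomorphUnitSphereProd (EuclideanSpace ℝ (Fin m)) = g ∘ Subtype.val := funext hG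
    rw [h2, ← (MeasurableEmbedding.subtype_coe
      (measurableSet_singleton (0 : (EuclideanSpace ℝ (Fin m)))).compl).integrable_map_iff, map_comap_subtype_coe
      (measurableSet_singleton (0 : (EuclideanSpace ℝ (Fin m)))).compl, hres]
    exact hg
  rw [h1, integral_prod_symm _ hGi]
  refine integral_eq_zero_of_ae ?_
  have h3 : ∀ᵐ r : Ioi (0 : ℝ) ∂(Measure.comap Subtype.val volume),
      ∫ v, g (r.1 • v) ∂(nuS m) = 0 := by
    have h4 := ae_restrict_of_ae_restrict_of_subset Ioi_subset_Ici_self h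
    rw [← map_comap_subtype_coe measurableSet_Ioi,
      (MeasurableEmbedding.subtype_coe measurableSet_Ioi).ae_map_iff] at h4
    exact h4
  refine (withDensity_absolutelyContinuous _ _).ae_le ?_
  filter_upwards [h3] with r hr
  rw [nuS, (MeasurableEmbedding.subtype_coe isClosed_sphere.measurableSet).integral_map] at hr
  exact hr

theorem stmt4 {m : ℕ} (f : EuclideanSpace ℝ (Fin m) → ℝ)
    (hmeas : Measurable f) (hbdd : ∃ C : ℝ, ∀ x, |f x| ≤ C)
    (hsupp : HasCompactSupport f) :
    (∀ x : EuclideanSpace ℝ (Fin m), BalanceLawAt f x →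
      ((∫ z, f z) • x = ∫ z, f z • z) ∧
      ((∫ z, f z) ≠ 0 → x = (∫ z, f z)⁻¹ • ∫ z, f z • z)) ∧
    (((∫ z, f z) = 0 ∧ (∫ z, f z • z) ≠ 0) →
      ¬ ∃ x : EuclideanSpace ℝ (Fin m), BalanceLawAt f x) := by
  have main : ∀ x : EuclideanSpace ℝ (Fin m), BalanceLawAt f x →
      (∫ z, f z) • x = ∫ z, f z • z := by
    intro x hx
    rcases Nat.eq_zero_or_pos m with rfl | hm
    · exact Subsingleton.elim _ _
    obtain ⟨C, hC⟩ := hbdd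
    have hfi : Integrable f := by
      have h1 : IntegrableOn f (tsupport f) :=
        Measure.integrableOn_of_bounded (M := C) hsupp.isCompact.measure_lt_top.ne
          hmeas.aestronglyMeasurable (Eventually.of_forall fun z => by simpa using hC z)
      exact (integrableOn_iff_integrable_of_support_subset (subset_tsupport f)).1 h1
    obtain ⟨R, hR⟩ := hsupp.isCompact.isBounded.exists_norm_le
    have hfz : Integrable fun z => f z • z := by
      refine Integrable.mono' (hfi.norm.mul_const R)
        (hmeas.aestronglyMeasurable.smul aestronglyMeasurable_id) (Eventually.of_forall fun z => ?_)
      rw [norm_smul]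
      by_cases hz : f z = 0
      · simp [hz]
      · exact mul_le_mul_of_nonneg_left (hR z (subset_tsupport f hz)) (norm_nonneg _)
    have hsub : Integrable fun z => f z • (z - x) := by
      simp_rw [smul_sub]
      exact hfz.sub (hfi.smul_const x)
    have hshift : (fun z => f (x + z) • z) = fun z => (fun z => f z • (z - x)) (x + z) := by
      ext1 z; simp
    have h0 : ∫ z, f (x + z) • z = 0 := by
      apply polar_zero hm
      · rw [hshift]
        exact hsub.comp_add_left x
      · obtain ⟨c, hc⟩ := nuS_eq hm
        filter_upwards [hx] with r hr
        rw [hc, integral_smul_measure]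
        have : ∫ v in sphere (0 : EuclideanSpace ℝ (Fin m)) 1, f (x + r • v) • r • v
            ∂(μH[(m : ℝ) - 1]) = 0 := by
          simp_rw [smul_comm _ r]
          rw [integral_smul, hr, smul_zero]
        rw [this, smul_zero]
    rw [hshift, integral_add_left_eq_self (fun z => f z • (z - x)) x] at h0
    simp_rw [smul_sub] at h0
    rw [integral_sub hfz (hfi.smul_const x), integral_smul_const, sub_eq_zero] at h0
    exact h0.symm
  refine ⟨fun x hx => ⟨main x hx, fun h => ?_⟩, ?_⟩
  · rw [← main x hx, smul_smul, inv_mul_cancel₀ h, one_smul]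
  · rintro ⟨h0, h1⟩ ⟨x, hx⟩
    apply h1
    rw [← main x hx, h0, zero_smul]
end
end

section
/- Let Ω ⊂ ℝ² be a triangle, i.e. the convex hull of three affinely independent points. If Ω satisfies the balance law at the origin, then Ω is an equilateral triangle whose centroid is the origin. -/
open MeasureTheory Metric Set

noncomputable section

lemma hsph_fin : μH[(1:ℝ)] (sphere (0:ℂ) 1) < ⊤ := by
  have hl : LipschitzWith 1 (fun t : ℝ => Complex.exp (t * Complex.I)) := by
    apply lipschitzWith_of_nnnorm_deriv_le
    · intro x; fun_prop
    · intro x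
      have : HasDerivAt (fun t : ℝ => Complex.exp (t * Complex.I))
          (Complex.exp (x * Complex.I) * (1 * Complex.I)) x := by
        exact ((Complex.ofRealCLM.hasDerivAt (x := x)).mul_const Complex.I).cexp
      rw [this.deriv, ← NNReal.coe_le_coe]
      simp
  have hsub : sphere (0:ℂ) 1 ⊆ (fun t : ℝ => Complex.exp (t * Complex.I)) '' (Icc (-Real.pi) Real.pi) := by
    intro z hz
    refine ⟨z.arg, ⟨(Complex.neg_pi_lt_arg z).le, Complex.arg_le_pi z⟩, ?_⟩
    have := Complex.norm_mul_exp_arg_mul_I z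
    have hz' : ‖z‖ = 1 := by simpa using hz
    simpa [hz'] using this
  refine (measure_mono hsub).trans_lt ((hl.hausdorffMeasure_image_le zero_le_one _).trans_lt ?_)
  rw [hausdorffMeasure_real]
  simp

lemma hsph_pos : μH[(1:ℝ)] (sphere (0:ℂ) 1) ≠ 0 := by
  intro h0
  have hl : LipschitzWith 1 (fun z : ℂ => z.re) := by
    apply LipschitzWith.of_dist_le_mul
    intro x y
    simp only [NNReal.coe_one, one_mul, Real.dist_eq, Complex.dist_eq]
    rw [← Complex.sub_re]; exact Complex.abs_re_le_norm _
  have h1 := hl.hausdorffMeasure_image_le zero_le_one (sphere (0:ℂ) 1)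
  rw [h0, hausdorffMeasure_real] at h1
  have hsub : Icc (-1:ℝ) 1 ⊆ (fun z : ℂ => z.re) '' (sphere (0:ℂ) 1) := by
    intro x hx
    refine ⟨⟨x, Real.sqrt (1 - x^2)⟩, ?_, rfl⟩
    have : (0:ℝ) ≤ 1 - x^2 := by nlinarith [hx.1, hx.2]
    simp only [mem_sphere_iff_norm, sub_zero]
    rw [← sq_eq_sq₀ (norm_nonneg _) zero_le_one, Complex.sq_norm, Complex.normSq_mk, ← sq, ← sq, Real.sq_sqrt this]
    ring
  have h2 := (measure_mono hsub).trans h1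
  simp at h2
  norm_num at h2

lemma null_norm {p : ℝ → Prop} (h : ∀ᵐ r ∂(volume.restrict (Ici (0:ℝ))), p r) :
    ∀ᵐ x : ℂ, p ‖x‖ := by
  rw [ae_iff] at h
  obtain ⟨N, hN, hNm, hN0⟩ := exists_measurable_superset_of_null h
  have key : ∫⁻ x : ℂ, N.indicator (fun _ => 1) ‖x‖ = 0 := by
    rw [← Complex.lintegral_comp_polarCoord_symm]
    have h1 : ∀ᵐ q : ℝ × ℝ ∂(volume.restrict polarCoord.target), q.1 ∉ N := by
      rw [polarCoord_target, Measure.volume_eq_prod, ← Measure.prod_restrict]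
      have : ∀ᵐ r ∂(volume.restrict (Ioi (0:ℝ))), r ∉ N := by
        have : ∀ᵐ r ∂(volume.restrict (Ici (0:ℝ))), r ∉ N := measure_eq_zero_iff_ae_notMem.1 hN0
        exact ae_restrict_of_ae_restrict_of_subset Ioi_subset_Ici_self this
      exact Measure.quasiMeasurePreserving_fst.ae this
    have h2 : ∀ᵐ q : ℝ × ℝ ∂(volume.restrict polarCoord.target), q ∈ polarCoord.target :=
      ae_restrict_mem polarCoord.open_target.measurableSet
    rw [lintegral_congr_ae (g := fun _ => 0)]
    · simp
    filter_upwards [h1, h2] with q hq hq2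
    have : ‖Complex.polarCoord.symm q‖ = q.1 := by
      rw [Complex.norm_polarCoord_symm]
      exact abs_of_pos hq2.1
    simp only [this, indicator_of_notMem hq, smul_zero]
  rw [lintegral_eq_zero_iff] at key
  · filter_upwards [key] with x hx
    by_contra hc
    have : ‖x‖ ∈ N := hN hc
    simp [this] at hx
  · exact (measurable_const.indicator hNm).comp measurable_norm

lemma rot_lebesgue (w : ℂ) (hw : ‖w‖ = 1) : MeasurePreserving (fun x : ℂ => w * x) volume volume :=
  (rotation ⟨w, by simpa [Submonoid.unitSphere] using hw⟩).measurePreserving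

lemma rot_sphere (w : ℂ) (hw : ‖w‖ = 1) (F : ℂ → ℂ) :
    ∫ v in sphere (0:ℂ) 1, F (v * w) ∂μH[(1:ℝ)] = ∫ v in sphere (0:ℂ) 1, F v ∂μH[(1:ℝ)] := by
  let e := (rotation ⟨w, by simpa [Submonoid.unitSphere] using hw⟩).toIsometryEquiv
  have he : ∀ v, e v = v * w := fun v => by rw [mul_comm]; rfl
  have h := (e.measurePreserving_hausdorffMeasure 1).setIntegral_preimage_emb
    e.toHomeomorph.measurableEmbedding F (sphere 0 1)
  have hp : e ⁻¹' (sphere 0 1) = sphere 0 1 := by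
    ext v; rw [mem_preimage, he]; simp [hw]
  rw [hp] at h
  simpa [he] using h

lemma balance_integral {K : Set ℂ} (hK : IsCompact K)
    (hb : ∀ᵐ r ∂(volume.restrict (Ici (0 : ℝ))),
      (∫ v in sphere (0 : ℂ) 1, (K.indicator (fun _ => (1 : ℝ)) (r • v)) • v ∂μH[(1:ℝ)]) = 0)
    {g : ℝ → ℝ} (hg : Continuous g) :
    ∫ x in K, (g (‖x‖^2)) • x = 0 := by
  set ν : Measure ℂ := (μH[(1:ℝ)]).restrict (sphere (0:ℂ) 1) with hν
  have : IsFiniteMeasure ν := ⟨by simpa [hν] using hsph_fin⟩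
  set f : ℂ → ℂ := K.indicator (fun x => (g (‖x‖^2)) • x) with hf
  have hfc : Continuous (fun x : ℂ => (g (‖x‖^2)) • x) := by fun_prop
  have hfi : Integrable f := by
    rw [hf, integrable_indicator_iff hK.measurableSet]
    exact hfc.continuousOn.integrableOn_compact hK
  have hfm : Measurable f := hfc.measurable.indicator hK.measurableSet
  have hms : ∀ᵐ v ∂ν, ‖v‖ = 1 := by
    filter_upwards [ae_restrict_mem (μ := μH[(1:ℝ)]) (isClosed_sphere (x := (0:ℂ)) (ε := 1)).measurableSet] with v hv
    simpa using hv
  have hemb : ∀ v : ℂ, ‖v‖ = 1 → MeasurableEmbedding (fun x : ℂ => v * x) := fun v hv =>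
    (Homeomorph.mulLeft₀ v (by intro h; simp [h] at hv)).measurableEmbedding
  have hF : Integrable (Function.uncurry fun v x => f (v * x)) (ν.prod volume) := by
    rw [integrable_prod_iff]
    · constructor
      · filter_upwards [hms] with v hv
        exact (rot_lebesgue v hv).integrable_comp_of_integrable hfi
      · refine (integrable_const (∫ x, ‖f x‖)).congr ?_
        filter_upwards [hms] with v hv
        exact ((rot_lebesgue v hv).integral_comp (hemb v hv) (fun x => ‖f x‖)).symm
    · exact (hfm.comp (measurable_fst.mul measurable_snd)).aestronglyMeasurable
  have hsw := integral_integral_swap hF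
  have hl : ∫ v, (∫ x, f (v * x)) ∂ν = ν.real univ • ∫ x, f x := by
    rw [← integral_const]
    apply integral_congr_ae
    filter_upwards [hms] with v hv
    exact (rot_lebesgue v hv).integral_comp (hemb v hv) f
  have hr : ∫ x, ∫ v, f (v * x) ∂ν = 0 := by
    rw [integral_congr_ae (g := fun _ => 0)]
    · simp
    filter_upwards [null_norm hb] with x hx
    by_cases hx0 : x = 0
    · have : ∀ v, f (v * x) = 0 := by
        intro v; simp [hf, hx0]
      simp [this]
    have hn : ‖x‖ ≠ 0 := by simpa using hx0
    have hnc : (‖x‖:ℂ) ≠ 0 := by exact_mod_cast hn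
    have hw : ‖x / ‖x‖‖ = 1 := by simp [hn]
    have h1 := rot_sphere (x / ‖x‖) hw (fun v => f (v * ‖x‖))
    have h2 : ∀ v : ℂ, v * (x / ‖x‖) * ‖x‖ = v * x := by
      intro v; field_simp
    simp only [h2] at h1
    show ∫ v in sphere (0:ℂ) 1, f (v * x) ∂μH[(1:ℝ)] = 0
    rw [h1]
    have h3 : ∫ v in sphere (0:ℂ) 1, f (v * ‖x‖) ∂μH[(1:ℝ)] =
        ∫ v in sphere (0:ℂ) 1, (g (‖x‖^2) * ‖x‖) • ((K.indicator (fun _ => (1 : ℝ)) (‖x‖ • v)) • v) ∂μH[(1:ℝ)] := by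
      apply setIntegral_congr_fun (isClosed_sphere (x := (0:ℂ)) (ε := 1)).measurableSet
      intro v hv
      have hv' : ‖v‖ = 1 := by simpa using hv
      have he : (‖x‖ : ℝ) • v = v * ‖x‖ := by rw [Complex.real_smul, mul_comm]
      simp only [he, hf]
      by_cases hm : v * (‖x‖:ℂ) ∈ K
      · simp [hm, hv']; ring
      · simp [hm]
    rw [h3, integral_smul, hx, smul_zero]
  rw [hl, hr] at hsw
  have hpos : ν.real univ ≠ 0 := by
    rw [measureReal_def, ENNReal.toReal_ne_zero]
    exact ⟨by simpa [hν] using hsph_pos, measure_ne_top _ _⟩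
  rw [← integral_indicator hK.measurableSet]
  exact (smul_eq_zero.1 hsw).resolve_left hpos

/-- The average of `G(|x|²)` over the segment from `P` to `Q`. -/
def segMean (G : ℝ → ℝ) (P Q : ℂ) : ℝ := ∫ t in (0:ℝ)..1, G (‖P + t • (Q - P)‖^2)

lemma segMean_symm (G : ℝ → ℝ) (P Q : ℂ) : segMean G P Q = segMean G Q P := by
  unfold segMean
  have := intervalIntegral.integral_comp_sub_left (a := 0) (b := 1)
    (fun t : ℝ => G (‖P + t • (Q - P)‖^2)) 1
  simp only [sub_zero, sub_self] at this
  rw [← this]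
  congr 1
  ext t
  congr 3
  module

def stdTri : Set (ℝ × ℝ) := {p | 0 ≤ p.1 ∧ 0 ≤ p.2 ∧ p.1 + p.2 ≤ 1}

lemma stdTri_compact : IsCompact stdTri := by
  apply (isCompact_Icc (a := ((0:ℝ),(0:ℝ))) (b := ((1:ℝ),(1:ℝ)))).of_isClosed_subset
  · exact (isClosed_le continuous_const continuous_fst).inter
      ((isClosed_le continuous_const continuous_snd).inter
        (isClosed_le (continuous_fst.add continuous_snd) continuous_const))
  · rintro ⟨x, y⟩ ⟨h1, h2, h3⟩
    simp only at h1 h2 h3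
    exact ⟨⟨h1, h2⟩, ⟨by simp only; linarith, by simp only; linarith⟩⟩

lemma mem_tri (A B C x : ℂ) : x ∈ convexHull ℝ {A, B, C} ↔
    ∃ p ∈ stdTri, x = A + (p.1 • (C - A) + p.2 • (B - A)) := by
  rw [convexHull_insert (by simp), convexHull_pair, mem_convexJoin]
  constructor
  · rintro ⟨a, ha, y, hy, hx⟩
    rw [mem_singleton_iff] at ha
    subst ha
    rw [segment_eq_image'] at hy hx
    obtain ⟨θ, hθ, rfl⟩ := hy
    obtain ⟨η, hη, rfl⟩ := hx
    refine ⟨(η * θ, η * (1 - θ)), ⟨?_, ?_, ?_⟩, ?_⟩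
    · exact mul_nonneg hη.1 hθ.1
    · exact mul_nonneg hη.1 (by linarith [hθ.2])
    · simp only; nlinarith [hη.2]
    · simp only; module
  · rintro ⟨⟨t, s⟩, ⟨h1, h2, h3⟩, rfl⟩
    simp only at h1 h2 h3 ⊢
    refine ⟨A, rfl, ?_⟩
    simp only [segment_eq_image']
    rcases eq_or_lt_of_le (add_nonneg h1 h2) with h0 | h0
    · have : t = 0 := by linarith
      have : s = 0 := by linarith
      subst_vars
      exact ⟨B, ⟨0, by simp, by simp⟩, ⟨0, by simp, by simp⟩⟩
    · refine ⟨B + (t / (t + s)) • (C - B), ⟨_, ⟨by positivity, ?_⟩, rfl⟩, ⟨t + s, ⟨h0.le, h3⟩, ?_⟩⟩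
      · rw [div_le_one h0]; linarith
      · simp only
        have : t = (t + s) * (t / (t + s)) := by field_simp
        rw [show B + (t / (t + s)) • (C - B) - A = (B - A) + (t / (t + s)) • (C - B) by abel,
          smul_add, smul_smul, ← this]
        module

lemma integral_stdTri {H : ℝ × ℝ → ℝ} (hH : Continuous H) :
    ∫ p in stdTri, H p = ∫ t in (0:ℝ)..1, ∫ s in (0:ℝ)..(1 - t), H (t, s) := by
  rw [← integral_indicator stdTri_compact.measurableSet, Measure.volume_eq_prod, integral_prod]
  · rw [intervalIntegral.integral_of_le zero_le_one, ← integral_Icc_eq_integral_Ioc,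
      ← integral_indicator measurableSet_Icc]
    congr 1
    ext t
    by_cases ht : t ∈ Icc (0:ℝ) 1
    · rw [indicator_of_mem ht, intervalIntegral.integral_of_le (by linarith [ht.2]),
        ← integral_Icc_eq_integral_Ioc, ← integral_indicator measurableSet_Icc]
      congr 1
      ext s
      by_cases hs : s ∈ Icc 0 (1 - t)
      · rw [indicator_of_mem hs, indicator_of_mem]
        exact ⟨ht.1, hs.1, by simp only; linarith [hs.2]⟩
      · rw [indicator_of_notMem hs, indicator_of_notMem]
        rintro ⟨h1, h2, h3⟩
        simp only at h1 h2 h3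
        exact hs ⟨h2, by linarith⟩
    · rw [indicator_of_notMem ht]
      have : ∀ s, stdTri.indicator H (t, s) = 0 := by
        intro s
        apply indicator_of_notMem
        rintro ⟨h1, h2, h3⟩
        simp only at h1 h2 h3
        exact ht ⟨h1, by linarith⟩
      simp [this]
  · rw [← Measure.volume_eq_prod, integrable_indicator_iff stdTri_compact.measurableSet]
    exact hH.continuousOn.integrableOn_compact stdTri_compact

/-- Nondegeneracy. -/
def NonDeg (A B C : ℂ) : Prop := ∀ s t : ℝ, s • (B - A) + t • (C - A) = 0 → s = 0 ∧ t = 0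

lemma exists_equiv {A B C : ℂ} (h : NonDeg A B C) :
    ∃ L : (ℝ × ℝ) ≃L[ℝ] ℂ, ∀ p, L p = p.1 • (C - A) + p.2 • (B - A) := by
  let f : (ℝ × ℝ) →ₗ[ℝ] ℂ := (LinearMap.fst ℝ ℝ ℝ).smulRight (C - A) + (LinearMap.snd ℝ ℝ ℝ).smulRight (B - A)
  have hf : ∀ p, f p = p.1 • (C - A) + p.2 • (B - A) := fun p => rfl
  have hinj : Function.Injective f := by
    rw [← LinearMap.ker_eq_bot, LinearMap.ker_eq_bot']
    intro p hp
    rw [hf, add_comm] at hp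
    obtain ⟨h1, h2⟩ := h _ _ hp
    exact Prod.ext h2 h1
  have hfr : Module.finrank ℝ (ℝ × ℝ) = Module.finrank ℝ ℂ := by simp
  exact ⟨(LinearMap.linearEquivOfInjective f hinj hfr).toContinuousLinearEquiv, fun p => hf p⟩

lemma integral_tri_zero {A B C : ℂ} (h : NonDeg A B C) (F : ℂ → ℝ)
    (h0 : ∫ x in convexHull ℝ {A, B, C}, F x = 0) :
    ∫ p in stdTri, F (A + (p.1 • (C - A) + p.2 • (B - A))) = 0 := by
  obtain ⟨L, hL⟩ := exists_equiv h
  set Ω := convexHull ℝ {A, B, C}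
  have hmem : ∀ p, A + L p ∈ Ω ↔ p ∈ stdTri := by
    intro p
    rw [mem_tri]
    constructor
    · rintro ⟨q, hq, he⟩
      rw [← hL q] at he
      rwa [L.injective (add_left_cancel he)]
    · intro hp
      exact ⟨p, hp, by rw [hL]⟩
  have hΩ : MeasurableSet Ω := (Set.Finite.isCompact_convexHull (𝕜 := ℝ) (s := {A, B, C}) (by simp)).measurableSet
  rw [← integral_indicator hΩ, ← integral_add_left_eq_self _ A] at h0
  have hv := Measure.isAddLeftInvariant_eq_smul (volume : Measure ℂ) (Measure.map L volume)
  set c := Measure.addHaarScalarFactor (volume : Measure ℂ) (Measure.map L volume)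
  have hc : c ≠ 0 := by
    intro hc
    rw [hc, zero_smul] at hv
    exact NeZero.ne _ hv
  have hme : MeasurableEmbedding L := L.toHomeomorph.measurableEmbedding
  rw [hv, integral_smul_nnreal_measure, hme.integral_map] at h0
  rw [smul_eq_zero] at h0
  have h1 := h0.resolve_left hc
  rw [← integral_indicator stdTri_compact.measurableSet, ← h1]
  congr 1
  ext p
  by_cases hp : p ∈ stdTri
  · rw [indicator_of_mem hp, indicator_of_mem ((hmem p).2 hp), hL]
  · rw [indicator_of_notMem hp, indicator_of_notMem (fun hh => hp ((hmem p).1 hh))]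

lemma segMean_eq {A B C : ℂ} (h : NonDeg A B C)
    (hb : ∀ᵐ r ∂(volume.restrict (Ici (0 : ℝ))),
      (∫ v in sphere (0 : ℂ) 1,
        ((convexHull ℝ {A, B, C}).indicator (fun _ => (1 : ℝ)) (r • v)) • v ∂μH[(1:ℝ)]) = 0)
    {G g : ℝ → ℝ} (hg : Continuous g) (hG : ∀ t, HasDerivAt G (g t) t) :
    segMean G B C = segMean G A C := by
  have hcpt : IsCompact (convexHull ℝ {A, B, C}) :=
    Set.Finite.isCompact_convexHull (𝕜 := ℝ) (s := {A, B, C}) (by simp)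
  have hGc : Continuous G := continuous_iff_continuousAt.2 fun t => (hG t).continuousAt
  have h1 := balance_integral hcpt hb hg
  have h2 : ∫ x in convexHull ℝ {A, B, C}, g (‖x‖^2) * (2 * inner ℝ x (B - A)) = 0 := by
    have hint : IntegrableOn (fun x : ℂ => g (‖x‖^2) • x) (convexHull ℝ {A, B, C}) := by
      apply ContinuousOn.integrableOn_compact hcpt
      fun_prop
    have := integral_inner (𝕜 := ℝ) hint ((2:ℝ) • (B - A))
    rw [h1, inner_zero_right] at this
    rw [← this]
    congr 1
    ext x
    rw [inner_smul_left, inner_smul_right, real_inner_comm]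
    simp; ring
  have h3 := integral_tri_zero h _ h2
  rw [integral_stdTri (by fun_prop)] at h3
  have h4 : ∀ t : ℝ, ∫ s in (0:ℝ)..(1 - t),
      g (‖A + (t • (C - A) + s • (B - A))‖^2) * (2 * inner ℝ (A + (t • (C - A) + s • (B - A))) (B - A))
      = G (‖B + t • (C - B)‖^2) - G (‖A + t • (C - A)‖^2) := by
    intro t
    have hd : ∀ s : ℝ, HasDerivAt (fun s : ℝ => G (‖A + (t • (C - A) + s • (B - A))‖^2))
        (g (‖A + (t • (C - A) + s • (B - A))‖^2) * (2 * inner ℝ (A + (t • (C - A) + s • (B - A))) (B - A))) s := by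
      intro s
      have ha : HasDerivAt (fun s : ℝ => A + (t • (C - A) + s • (B - A))) (B - A) s := by
        have := (((hasDerivAt_id s).smul_const (B - A)).const_add (t • (C - A))).const_add A
        simpa using this
      exact (hG _).comp s ha.norm_sq
    rw [intervalIntegral.integral_eq_sub_of_hasDerivAt (fun s _ => hd s)]
    · congr 4
      · module
      · simp
    · apply Continuous.intervalIntegrable
      fun_prop
  simp only [h4] at h3
  rw [intervalIntegral.integral_sub] at h3
  · exact sub_eq_zero.1 h3
  · apply Continuous.intervalIntegrable; fun_prop
  · apply Continuous.intervalIntegrable; fun_prop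

def SameDist (P Q P' Q' : ℂ) : Prop :=
  ∀ G g : ℝ → ℝ, Continuous g → (∀ t, HasDerivAt G (g t) t) → segMean G P Q = segMean G P' Q'

lemma SameDist.symm {P Q P' Q' : ℂ} (h : SameDist P Q P' Q') : SameDist P' Q' P Q :=
  fun G g h1 h2 => (h G g h1 h2).symm

lemma SameDist.trans {P Q P' Q' P'' Q'' : ℂ} (h : SameDist P Q P' Q') (h' : SameDist P' Q' P'' Q'') :
    SameDist P Q P'' Q'' :=
  fun G g h1 h2 => (h G g h1 h2).trans (h' G g h1 h2)

lemma SameDist.flip {P Q P' Q' : ℂ} (h : SameDist P Q P' Q') : SameDist Q P Q' P' :=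
  fun G g h1 h2 => by rw [segMean_symm, h G g h1 h2, segMean_symm]

lemma q_formula (P Q : ℂ) (t : ℝ) :
    ‖P + t • (Q - P)‖^2 = (1 - t) * ‖P‖^2 + t * ‖Q‖^2 - t * (1 - t) * ‖P - Q‖^2 := by
  simp only [Complex.sq_norm, Complex.normSq_apply]
  simp
  ring

lemma hasDerivAt_pos_sq (M t : ℝ) :
    HasDerivAt (fun t : ℝ => (max 0 (t - M))^2) (2 * max 0 (t - M)) t := by
  rcases lt_trichotomy t M with h | h | h
  · rw [max_eq_left (by linarith), mul_zero]
    apply (hasDerivAt_const t (0:ℝ)).congr_of_eventuallyEq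
    filter_upwards [gt_mem_nhds h] with u hu
    rw [max_eq_left (by linarith)]; norm_num
  · subst h
    simp only [sub_self, max_self, mul_zero]
    rw [hasDerivAt_iff_isLittleO]
    have h1 : (fun u : ℝ => (max 0 (u - t))^2 - (max 0 (t - t))^2 - (u - t) • (0:ℝ)) =O[nhds t] fun u => (u - t)^2 := by
      apply Asymptotics.IsBigO.of_bound 1
      filter_upwards with u
      simp only [sub_self, max_self, smul_zero, sub_zero, Real.norm_eq_abs, abs_pow, one_mul, sq_abs]
      rw [zero_pow two_ne_zero, sub_zero, abs_of_nonneg (sq_nonneg _)]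
      rcases max_cases 0 (u - t) with ⟨h, _⟩ | ⟨h, _⟩ <;> rw [h] <;> nlinarith [sq_nonneg (u - t)]
    apply h1.trans_isLittleO
    have h2 : (fun x : ℝ => x^2) =o[nhds 0] fun x => x := by
      simpa using Asymptotics.isLittleO_pow_id (𝕜 := ℝ) one_lt_two
    have h3 : Filter.Tendsto (fun u : ℝ => u - t) (nhds t) (nhds 0) := by
      have : Continuous fun u : ℝ => u - t := by fun_prop
      simpa using this.tendsto t
    exact h2.comp_tendsto h3
  · rw [max_eq_right (by linarith)]
    have : HasDerivAt (fun u : ℝ => (u - M)^2) (2 * (t - M)) t := by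
      have := ((hasDerivAt_id t).sub_const M).fun_pow 2
      simpa using this
    apply this.congr_of_eventuallyEq
    filter_upwards [lt_mem_nhds h] with u hu
    rw [max_eq_right (by linarith)]

lemma hasDerivAt_neg_sq (M t : ℝ) :
    HasDerivAt (fun t : ℝ => (max 0 (M - t))^2) (-(2 * max 0 (M - t))) t := by
  have h := (hasDerivAt_pos_sq (-M) (-t)).comp t (hasDerivAt_neg t)
  have e : ∀ u : ℝ, -u - -M = M - u := fun u => by ring
  simp only [Function.comp_def, e] at h
  simpa using h

lemma SameDist.support {P Q P' Q' : ℂ} (h : SameDist P Q P' Q') {G g : ℝ → ℝ}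
    (hg : Continuous g) (hG : ∀ t, HasDerivAt G (g t) t) (hnn : ∀ t, 0 ≤ G t)
    (h0 : ∀ t ∈ Icc (0:ℝ) 1, G (‖P + t • (Q - P)‖^2) = 0) :
    ∀ t ∈ Icc (0:ℝ) 1, G (‖P' + t • (Q' - P')‖^2) = 0 := by
  intro t ht
  have hGc : Continuous G := continuous_iff_continuousAt.2 fun t => (hG t).continuousAt
  by_contra hne
  have hpos : 0 < segMean G P' Q' := by
    apply intervalIntegral.integral_pos zero_lt_one
    · apply Continuous.continuousOn; fun_prop
    · exact fun x _ => hnn _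
    · exact ⟨t, ht, lt_of_le_of_ne (hnn _) (Ne.symm hne)⟩
  have hz : segMean G P Q = 0 := by
    unfold segMean
    rw [intervalIntegral.integral_congr (g := fun _ => 0)]
    · simp
    · intro s hs
      rw [uIcc_of_le zero_le_one] at hs
      exact h0 s hs
  rw [← h G g hg hG, hz] at hpos
  exact lt_irrefl _ hpos

lemma SameDist.upper {P Q P' Q' : ℂ} (h : SameDist P Q P' Q') {M : ℝ}
    (h0 : ∀ t ∈ Icc (0:ℝ) 1, ‖P + t • (Q - P)‖^2 ≤ M) :
    ∀ t ∈ Icc (0:ℝ) 1, ‖P' + t • (Q' - P')‖^2 ≤ M := by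
  intro t ht
  have := h.support (G := fun t : ℝ => (max 0 (t - M))^2) (by fun_prop) (hasDerivAt_pos_sq M)
    (fun _ => sq_nonneg _) (fun t ht => by
      rw [max_eq_left (by linarith [h0 t ht])]; norm_num) t ht
  simp only [sq_eq_zero_iff, max_eq_left_iff] at this
  linarith

lemma SameDist.lower {P Q P' Q' : ℂ} (h : SameDist P Q P' Q') {M : ℝ}
    (h0 : ∀ t ∈ Icc (0:ℝ) 1, M ≤ ‖P + t • (Q - P)‖^2) :
    ∀ t ∈ Icc (0:ℝ) 1, M ≤ ‖P' + t • (Q' - P')‖^2 := by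
  intro t ht
  have := h.support (G := fun t : ℝ => (max 0 (M - t))^2) (by fun_prop) (hasDerivAt_neg_sq M)
    (fun _ => sq_nonneg _) (fun t ht => by
      rw [max_eq_left (by linarith [h0 t ht])]; norm_num) t ht
  simp only [sq_eq_zero_iff, max_eq_left_iff] at this
  linarith

lemma segMean_id (P Q : ℂ) :
    segMean (fun t => t) P Q = (‖P‖^2 + ‖Q‖^2) / 2 - ‖P - Q‖^2 / 6 := by
  unfold segMean
  simp only [q_formula]
  have hd : ∀ t : ℝ, HasDerivAt
      (fun t : ℝ => ‖P‖^2 * (t - t^2/2) + ‖Q‖^2 * (t^2/2) - ‖P - Q‖^2 * (t^2/2 - t^3/3))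
      ((1 - t) * ‖P‖^2 + t * ‖Q‖^2 - t * (1 - t) * ‖P - Q‖^2) t := by
    intro t
    have h1 := hasDerivAt_id' t
    have h2 := (hasDerivAt_pow 2 t).div_const 2
    have h3 := (hasDerivAt_pow 3 t).div_const 3
    have := (((h1.sub h2).const_mul (‖P‖^2)).add (h2.const_mul (‖Q‖^2))).sub ((h2.sub h3).const_mul (‖P - Q‖^2))
    refine this.congr_deriv ?_
    norm_num
    ring
  rw [intervalIntegral.integral_eq_sub_of_hasDerivAt (fun t _ => hd t)]
  · ring
  · apply Continuous.intervalIntegrable; fun_prop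

lemma SameDist.mean {P Q P' Q' : ℂ} (h : SameDist P Q P' Q') :
    (‖P‖^2 + ‖Q‖^2) / 2 - ‖P - Q‖^2 / 6 = (‖P'‖^2 + ‖Q'‖^2) / 2 - ‖P' - Q'‖^2 / 6 := by
  rw [← segMean_id, ← segMean_id]
  exact h _ (fun _ => 1) continuous_const (fun t => hasDerivAt_id' t)

lemma SameDist.le_max {P Q P' Q' : ℂ} (h : SameDist P Q P' Q') :
    ‖P'‖^2 ≤ max (‖P‖^2) (‖Q‖^2) := by
  have := h.upper (M := max (‖P‖^2) (‖Q‖^2)) (fun t ht => by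
    rw [q_formula]
    have h1 := le_max_left (‖P‖^2) (‖Q‖^2)
    have h2 := le_max_right (‖P‖^2) (‖Q‖^2)
    have h3 : 0 ≤ t * (1 - t) * ‖P - Q‖^2 :=
      mul_nonneg (mul_nonneg ht.1 (by linarith [ht.2])) (sq_nonneg _)
    nlinarith [ht.1, ht.2, mul_le_mul_of_nonneg_left h1 (by linarith [ht.2] : 0 ≤ 1 - t),
      mul_le_mul_of_nonneg_left h2 ht.1]) 0 (by simp)
  simpa using this

lemma no_apex {A B C : ℂ} (hn : NonDeg A B C) (h1 : SameDist A B C A) (h2 : SameDist A B C B)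
    (hAB : ‖A‖^2 = ‖B‖^2) (hC : ‖C‖^2 < ‖A‖^2) : False := by
  have m1 := h1.mean
  have m2 := h2.mean
  set R := ‖A‖^2 with hR
  set γ := ‖C‖^2 with hγ
  rw [← hAB] at m1 m2
  have hl : ‖C - B‖^2 = ‖C - A‖^2 := by linarith
  set ℓ := ‖C - A‖^2 with hℓ
  set k := ‖A - B‖^2 with hk
  have hℓ0 : 0 < ℓ := by
    have : C - A ≠ 0 := by
      intro h0
      have := hn 0 1 (by simp [h0])
      simp at this
    positivity
  -- minimum on AB is R - k/4
  have lo1 := h1.lower (M := R - k / 4) (fun t ht => by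
    rw [q_formula, ← hR, ← hk, ← hAB]
    have : 0 ≤ k := sq_nonneg _
    nlinarith [mul_nonneg this (sq_nonneg (2 * t - 1))])
  simp only [q_formula, ← hR, ← hγ, ← hℓ] at lo1
  have up : ∀ M : ℝ, (∀ t ∈ Icc (0:ℝ) 1, M ≤ (1 - t) * γ + t * R - t * (1 - t) * ℓ) → M ≤ R - k / 4 := by
    intro M hM
    have := h1.symm.lower (M := M) (fun t ht => by
      rw [q_formula]; exact hM t ht) (1/2) (by norm_num)
    rw [q_formula, ← hR, ← hk, ← hAB] at this
    linarith
  have hg1 : R - k / 4 ≤ γ := by simpa using lo1 0 (by simp)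
  by_cases hc : ℓ ≤ R - γ
  · have hg2 : γ ≤ R - k / 4 := up γ (fun t ht => by
      have : 0 ≤ t * ((R - γ) - ℓ + t * ℓ) :=
        mul_nonneg ht.1 (by nlinarith [ht.1])
      nlinarith)
    have hk4 : k = 4 * ℓ := by linarith
    have hz : ‖(A - C) + (B - C)‖^2 = 0 := by
      have : ‖(A - C) + (B - C)‖^2 = 2 * ‖C - A‖^2 + 2 * ‖C - B‖^2 - ‖A - B‖^2 := by
        simp only [Complex.sq_norm, Complex.normSq_apply]
        simp
        ring
      rw [this, hl, ← hk, ← hℓ]; linarith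
    have hz' : (A - C) + (B - C) = 0 := by simpa using hz
    have := hn 1 (-2) (by rw [← hz']; module)
    simp at this
  · push Not at hc
    have hs : (ℓ - (R - γ)) / (2 * ℓ) ∈ Icc (0:ℝ) 1 := by
      constructor
      · apply div_nonneg <;> linarith
      · rw [div_le_one (by linarith)]; linarith
    have e1 := lo1 _ hs
    have e2 := up (γ - (ℓ - (R - γ))^2 / (4 * ℓ)) (fun t ht => by
      have : (1 - t) * γ + t * R - t * (1 - t) * ℓ - (γ - (ℓ - (R - γ))^2 / (4 * ℓ))
        = (2 * ℓ * t - (ℓ - (R - γ)))^2 / (4 * ℓ) := by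
        field_simp; ring
      have h3 : 0 ≤ (2 * ℓ * t - (ℓ - (R - γ)))^2 / (4 * ℓ) := by positivity
      linarith)
    have e3 : (1 - (ℓ - (R - γ)) / (2 * ℓ)) * γ + (ℓ - (R - γ)) / (2 * ℓ) * R
      - (ℓ - (R - γ)) / (2 * ℓ) * (1 - (ℓ - (R - γ)) / (2 * ℓ)) * ℓ = γ - (ℓ - (R - γ))^2 / (4 * ℓ) := by
      field_simp; ring
    rw [e3] at e1
    have e4 : R - k / 4 = γ - (ℓ - (R - γ))^2 / (4 * ℓ) := le_antisymm e1 e2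
    have e5 : k = 3 * (R - γ) + ℓ := by linarith
    rw [e5] at e4
    field_simp at e4
    have e6 : (R - γ) * (ℓ - (R - γ)) = 0 := by nlinarith
    rcases mul_eq_zero.1 e6 with h | h <;> linarith

lemma NonDeg.rot {A B C : ℂ} (h : NonDeg A B C) : NonDeg B C A := by
  intro s t hst
  have := h (-s - t) s (by rw [← hst]; module)
  exact ⟨this.2, by linarith [this.1, this.2]⟩

lemma complex_main {A B C : ℂ} (hn : NonDeg A B C)
    (hb : ∀ᵐ r ∂(volume.restrict (Ici (0 : ℝ))),
      (∫ v in sphere (0 : ℂ) 1,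
        ((convexHull ℝ {A, B, C}).indicator (fun _ => (1 : ℝ)) (r • v)) • v ∂μH[(1:ℝ)]) = 0) :
    ‖A - B‖ = ‖B - C‖ ∧ ‖B - C‖ = ‖C - A‖ ∧ A + B + C = 0 := by
  have s1 : SameDist B C C A := fun G g hg hG => by
    rw [segMean_eq hn hb hg hG, segMean_symm]
  have s2 : SameDist C A A B := fun G g hg hG => by
    have hperm : ({A, B, C} : Set ℂ) = {B, C, A} := by
      ext x; simp only [mem_insert_iff, mem_singleton_iff]; tauto
    rw [hperm] at hb
    rw [segMean_eq hn.rot hb hg hG, segMean_symm]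
  have s3 : SameDist A B B C := (s1.trans s2).symm
  have a1 := s2.symm.flip.le_max
  have fl : ∀ {P Q P' Q' : ℂ}, SameDist P Q P' Q' → SameDist P Q Q' P' :=
    fun h G g h1 h2 => by rw [h G g h1 h2, segMean_symm]
  have a1 := (fl s1).le_max -- A ≤ max B C
  have a2 := (fl s2).le_max -- B ≤ max C A
  have a3 := (fl s3).le_max -- C ≤ max A B
  have hAB : ¬ (‖A‖^2 = ‖B‖^2 ∧ ‖C‖^2 < ‖A‖^2) := fun ⟨h1, h2⟩ =>
    no_apex hn s2.symm (fl s3) h1 h2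
  have hBC : ¬ (‖B‖^2 = ‖C‖^2 ∧ ‖A‖^2 < ‖B‖^2) := fun ⟨h1, h2⟩ =>
    no_apex hn.rot s3.symm (fl s1) h1 h2
  have hCA : ¬ (‖C‖^2 = ‖A‖^2 ∧ ‖B‖^2 < ‖C‖^2) := fun ⟨h1, h2⟩ =>
    no_apex hn.rot.rot s1.symm (fl s2) h1 h2
  have heq : ‖A‖^2 = ‖B‖^2 ∧ ‖B‖^2 = ‖C‖^2 := by
    generalize ‖A‖^2 = a at *
    generalize ‖B‖^2 = b at *
    generalize ‖C‖^2 = c at *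
    rw [le_max_iff] at a1 a2 a3
    grind
  obtain ⟨e1, e2⟩ := heq
  have m1 := s1.mean
  have m3 := s3.mean
  have l1 : ‖A - B‖^2 = ‖B - C‖^2 := by linarith
  have l2 : ‖B - C‖^2 = ‖C - A‖^2 := by linarith
  refine ⟨(sq_eq_sq₀ (norm_nonneg _) (norm_nonneg _)).1 l1,
    (sq_eq_sq₀ (norm_nonneg _) (norm_nonneg _)).1 l2, ?_⟩
  obtain ⟨L, hL⟩ := exists_equiv hn
  obtain ⟨p, hp⟩ := L.surjective (A + B + C)
  rw [hL] at hp
  have o1 : inner ℝ (A + B + C) (B - A) = (0:ℝ) := by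
    simp only [Complex.sq_norm, Complex.normSq_apply, Complex.inner] at *
    simp at *
    linarith
  have o2 : inner ℝ (A + B + C) (C - A) = (0:ℝ) := by
    simp only [Complex.sq_norm, Complex.normSq_apply, Complex.inner] at *
    simp at *
    linarith
  have : inner ℝ (A + B + C) (A + B + C) = (0:ℝ) := by
    nth_rewrite 2 [← hp]
    rw [inner_add_right, inner_smul_right, inner_smul_right, o1, o2]
    simp
  exact inner_self_eq_zero.1 this

theorem stmt6 (A B C : EuclideanSpace ℝ (Fin 2))
    (hind : AffineIndependent ℝ ![A, B, C])
    (hbal : SatisfiesBalanceLaw (convexHull ℝ {A, B, C})) :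
    dist A B = dist B C ∧ dist B C = dist C A ∧
      (3 : ℝ)⁻¹ • (A + B + C) = 0 := by
  let e : EuclideanSpace ℝ (Fin 2) ≃ₗᵢ[ℝ] ℂ := Complex.orthonormalBasisOneI.repr.symm
  have hn : NonDeg (e A) (e B) (e C) := by
    intro s t hst
    rw [← map_sub, ← map_sub, ← map_smul, ← map_smul, ← map_add, e.map_eq_zero_iff] at hst
    rw [affineIndependent_iff_linearIndependent_vsub ℝ _ (0 : Fin 3)] at hind
    have h2 := hind.comp (![⟨1, by simp⟩, ⟨2, by simp⟩] : Fin 2 → {x : Fin 3 // x ≠ 0}) (by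
      intro i j hij
      fin_cases i <;> fin_cases j <;> simp at hij ⊢)
    have h3 : LinearIndependent ℝ ![B - A, C - A] := by
      have heq : ![B - A, C - A] = ((fun i : {x : Fin 3 // x ≠ 0} => ![A, B, C] ↑i -ᵥ ![A, B, C] 0) ∘
          (![⟨1, by simp⟩, ⟨2, by simp⟩] : Fin 2 → {x : Fin 3 // x ≠ 0})) := by
        funext i
        fin_cases i <;> simp
      rw [heq]
      exact h2
    exact LinearIndependent.pair_iff.1 h3 s t hst
  have hb : ∀ᵐ r ∂(volume.restrict (Ici (0 : ℝ))),
      (∫ v in sphere (0 : ℂ) 1,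
        ((convexHull ℝ {e A, e B, e C}).indicator (fun _ => (1 : ℝ)) (r • v)) • v ∂μH[(1:ℝ)]) = 0 := by
    have him : convexHull ℝ {e A, e B, e C} = e '' (convexHull ℝ {A, B, C}) := by
      have := e.toLinearEquiv.toLinearMap.image_convexHull {A, B, C}
      simpa [image_insert_eq] using this.symm
    unfold SatisfiesBalanceLaw at hbal
    filter_upwards [hbal] with r hr
    have hone : (((2:ℕ):ℝ) - 1) = 1 := by norm_num
    rw [hone] at hr
    have hme : MeasurableEmbedding e.toIsometryEquiv := e.toHomeomorph.measurableEmbedding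
    have h := (e.toIsometryEquiv.measurePreserving_hausdorffMeasure 1).setIntegral_preimage_emb
      hme (fun v : ℂ => ((convexHull ℝ {e A, e B, e C}).indicator (fun _ => (1 : ℝ)) (r • v)) • v) (sphere 0 1)
    rw [← h]
    have hp : e.toIsometryEquiv ⁻¹' (sphere (0:ℂ) 1) = sphere 0 1 := by
      ext v
      show e v ∈ sphere (0:ℂ) 1 ↔ _
      simp
    rw [hp]
    have hcong : ∀ v, ((convexHull ℝ {e A, e B, e C}).indicator (fun _ => (1 : ℝ)) (r • e v)) • e v
        = e (((convexHull ℝ {A, B, C}).indicator (fun _ => (1 : ℝ)) (r • v)) • v) := by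
      intro v
      rw [map_smul, him, ← map_smul e r v]
      congr 1
      by_cases hm : r • v ∈ convexHull ℝ {A, B, C}
      · rw [indicator_of_mem hm, indicator_of_mem (mem_image_of_mem _ hm)]
      · rw [indicator_of_notMem hm, indicator_of_notMem]
        rwa [e.injective.mem_set_image]
    show ∫ v in sphere 0 1, ((convexHull ℝ {e A, e B, e C}).indicator (fun _ => (1 : ℝ)) (r • e v)) • e v ∂μH[(1:ℝ)] = 0
    simp only [hcong]
    have := e.toContinuousLinearEquiv.integral_comp_comm (μ := (μH[(1:ℝ)]).restrict (sphere 0 1))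
      (fun v => ((convexHull ℝ {A, B, C}).indicator (fun _ => (1 : ℝ)) (r • v)) • v)
    rw [hr, map_zero] at this
    exact this
  obtain ⟨h1, h2, h3⟩ := complex_main hn hb
  simp only [← map_sub, LinearIsometryEquiv.norm_map, ← dist_eq_norm] at h1 h2
  refine ⟨h1, h2, ?_⟩
  rw [← map_add, ← map_add, e.map_eq_zero_iff] at h3
  rw [h3, smul_zero]
end
end
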